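/- Let α ∈ [N, N+1) for an integer N ≥ 0, and let Γ = {0} × ℝ ⊂ 𝔾_α be the singular line with metric d((0,s),(0,t)) = |s-t|^{1/(1+α)}. If α > 0, then Γ does not admit a bi-Lipschitz embedding into ℝ^{N+1} but does admit one into ℝ^{N+2} — in particular, the Hausdorff dimension of Γ equals 1 + α, and any metric space of Hausdorff dimension 1 + α > N + 1 cannot bi-Lipschitz embed into ℝ^{N+1}. -/

import Mathlib

open Real MeasureTheory

/-!
Put `ε = 1 / (1 + α)`. A bi-Lipschitz image of the snowflaked line has Hausdorff dimension `1 / ε`,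
which rules out `ℝⁿ` for `1 / ε > n`. For `1 / ε = n ≥ 2` the image would have positive Lebesgue
measure; but a snowflake curve escapes to infinity in both directions without coming back close to
itself, so it cannot come close to every point of a sphere around one of its points. It is therefore
porous, hence null by Lebesgue's density theorem.

For `1 / ε < n` the embedding into `ℝⁿ` is built by induction on `n ≥ 2`. For `p ≤ q < 1 < p + q`
there is a curve `(h₁, h₂)` in the plane whose coordinates have Hölder exponents `p` and `q` and
such that any two points are separated by one of the coordinates at the rate its exponent allows. If
`g` embeds the line snowflaked with exponent `δ` into `ℝⁿ`, then for `p = ε` and `q = ε / δ` the map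
`(h₁, g ∘ h₂)` embeds the one snowflaked with exponent `ε` into `ℝⁿ⁺¹`.

The planar curve is the blow-down, along an ultrafilter, of a self-affine lattice path: each step of
an injective serpentine path of `M` diagonal steps across an `a × b` box, with `a ≈ M ^ p` and
`b ≈ M ^ q`, is replaced by a reflected copy of the path of the previous depth. There is room for
the serpentine because `M ^ (p + q)` is much larger than `M`.
-/

open Set Filter Metric Topology Bornology Function
open scoped NNReal ENNReal

/-! ### Snowflake embeddings -/

section Snowflake

variable {X Y Z : Type*}

/-- `f` is a bi-Lipschitz embedding of the snowflake `(X, dist ^ ε)` into `Y`; a single constant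
serves for both bounds. -/
def IsSnowflakeEmbedding [PseudoMetricSpace X] [PseudoMetricSpace Y] (ε : ℝ) (f : X → Y) : Prop :=
  ∃ C, 0 < C ∧ ∀ s t, dist (f s) (f t) ≤ C * dist s t ^ ε ∧ dist s t ^ ε ≤ C * dist (f s) (f t)

theorem holderOnWith_of_dist_le [PseudoMetricSpace X] [PseudoMetricSpace Y] {C r : ℝ} {f : X → Y}
    {S : Set X} (hC : 0 ≤ C) (hr : 0 ≤ r)
    (h : ∀ x ∈ S, ∀ y ∈ S, dist (f x) (f y) ≤ C * dist x y ^ r) :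
    HolderOnWith C.toNNReal r.toNNReal f S := by
  intro x hx y hy
  rw [Real.coe_toNNReal _ hr, edist_dist, edist_dist,
    ENNReal.ofReal_rpow_of_nonneg dist_nonneg hr, ← ENNReal.ofReal, ← ENNReal.ofReal_mul hC]
  exact ENNReal.ofReal_le_ofReal (h x hx y hy)

theorem isSnowflakeEmbedding_iff_exists_one_le [PseudoMetricSpace X] [PseudoMetricSpace Y] {ε : ℝ}
    {f : X → Y} :
    IsSnowflakeEmbedding ε f ↔ ∃ L, 1 ≤ L ∧ ∀ s t,
      L⁻¹ * dist s t ^ ε ≤ dist (f s) (f t) ∧ dist (f s) (f t) ≤ L * dist s t ^ ε := by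
  constructor
  · rintro ⟨C, hC, h⟩
    refine ⟨max C 1, le_max_right _ _, fun s t => ⟨?_, (h s t).1.trans ?_⟩⟩
    · rw [inv_mul_le_iff₀ (by positivity)]
      exact (h s t).2.trans (by gcongr; exact le_max_left _ _)
    · gcongr
      exact le_max_left _ _
  · rintro ⟨L, hL, h⟩
    have hL0 : 0 < L := one_pos.trans_le hL
    exact ⟨L, hL0, fun s t => ⟨(h s t).2, (inv_mul_le_iff₀ hL0).1 (h s t).1⟩⟩

theorem isSnowflakeEmbedding_one_id [PseudoMetricSpace X] :
    IsSnowflakeEmbedding 1 (id : X → X) :=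
  ⟨1, one_pos, fun s t => by simp⟩

namespace IsSnowflakeEmbedding

theorem comp_left [PseudoMetricSpace X] [PseudoMetricSpace Y] [PseudoMetricSpace Z] {ε : ℝ}
    {f : X → Y} (hf : IsSnowflakeEmbedding ε f) {g : Y → Z} {K K' : ℝ≥0}
    (hg : LipschitzWith K g) (hg' : AntilipschitzWith K' g) :
    IsSnowflakeEmbedding ε (g ∘ f) := by
  obtain ⟨C, hC, h⟩ := hf
  refine ⟨C * max (K + 1) K', by positivity, fun s t => ⟨?_, ?_⟩⟩
  · calc dist (g (f s)) (g (f t)) ≤ K * dist (f s) (f t) := hg.dist_le_mul _ _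
      _ ≤ max (K + 1) K' * (C * dist s t ^ ε) := by
        gcongr
        · exact (le_add_of_nonneg_right zero_le_one).trans (le_max_left _ _)
        · exact (h s t).1
      _ = _ := by ring
  · calc dist s t ^ ε ≤ C * dist (f s) (f t) := (h s t).2
      _ ≤ C * (max (K + 1) K' * dist (g (f s)) (g (f t))) := by
        gcongr
        exact (hg'.le_mul_dist _ _).trans (by gcongr; exact le_max_right _ _)
      _ = _ := by rw [comp_apply, comp_apply]; ring

section Holder

variable [MetricSpace X] [PseudoMetricSpace Y] {ε : ℝ} {f : X → Y}

theorem exists_holderWith (hf : IsSnowflakeEmbedding ε f) (hε : 0 ≤ ε) :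
    ∃ C, HolderWith C ε.toNNReal f := by
  obtain ⟨C, hC, h⟩ := hf
  exact ⟨C.toNNReal, holderOnWith_univ.1 <|
    holderOnWith_of_dist_le hC.le hε fun s _ t _ => (h s t).1⟩

protected theorem continuous (hf : IsSnowflakeEmbedding ε f) (hε : 0 < ε) : Continuous f :=
  let ⟨_, h⟩ := hf.exists_holderWith hε.le
  h.continuous (Real.toNNReal_pos.2 hε)

protected theorem injective (hf : IsSnowflakeEmbedding ε f) : Injective f := by
  obtain ⟨C, -, h⟩ := hf
  intro s t hst
  have hle : dist s t ^ ε ≤ 0 := by simpa [hst] using (h s t).2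
  exact dist_le_zero.1 (not_lt.1 fun hd => hle.not_gt (rpow_pos_of_pos hd ε))

theorem exists_leftInverse_holderOnWith (hf : IsSnowflakeEmbedding ε f) (hε : 0 < ε) [Nonempty X] :
    ∃ g C, LeftInverse g f ∧ HolderOnWith C ε⁻¹.toNNReal g (range f) := by
  have hinv := leftInverse_invFun hf.injective
  obtain ⟨C, hC, h⟩ := hf
  refine ⟨invFun f, (C ^ ε⁻¹).toNNReal, hinv,
    holderOnWith_of_dist_le (by positivity) (by positivity) ?_⟩
  rintro _ ⟨s, rfl⟩ _ ⟨t, rfl⟩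
  rw [hinv s, hinv t, ← mul_rpow hC.le dist_nonneg]
  exact (le_rpow_inv_iff_of_pos dist_nonneg (by positivity) hε).2 (h s t).2

end Holder

theorem dimH_range [MetricSpace X] [MetricSpace Y] {ε : ℝ} {f : X → Y}
    (hf : IsSnowflakeEmbedding ε f) (hε : 0 < ε) :
    dimH (range f) = dimH (univ : Set X) / ENNReal.ofReal ε := by
  rcases isEmpty_or_nonempty X with hX | hX
  · simp [range_eq_empty, univ_eq_empty_iff.2 hX]
  obtain ⟨C, hC⟩ := hf.exists_holderWith hε.le
  obtain ⟨g, C', hgf, hg⟩ := hf.exists_leftInverse_holderOnWith hε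
  refine le_antisymm (hC.dimH_range_le (Real.toNNReal_pos.2 hε)) ?_
  have hle := hg.dimH_image_le (Real.toNNReal_pos.2 (inv_pos.2 hε))
  rw [← range_comp, hgf.comp_eq_id, range_id, ← ENNReal.ofReal, ENNReal.ofReal_inv_of_pos hε,
    ENNReal.div_eq_inv_mul, inv_inv] at hle
  exact ENNReal.div_le_of_le_mul' hle

theorem tendsto_cobounded [PseudoMetricSpace X] [PseudoMetricSpace Y] {ε : ℝ} {f : X → Y}
    (hf : IsSnowflakeEmbedding ε f) (hε : 0 < ε) :
    Tendsto f (cobounded X) (cobounded Y) := by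
  obtain ⟨C, hC, h⟩ := hf
  rcases isEmpty_or_nonempty X with hX | ⟨⟨x₀⟩⟩
  · simp
  rw [← tendsto_dist_right_atTop_iff (f x₀)]
  refine tendsto_atTop_mono (fun x => (inv_mul_le_iff₀ hC).2 (h x x₀).2) ?_
  exact ((tendsto_rpow_atTop hε).comp
    (tendsto_dist_right_cobounded_atTop x₀)).const_mul_atTop (inv_pos.2 hC)

end IsSnowflakeEmbedding

end Snowflake

/-! ### Porosity of snowflake curves -/

theorem measure_eq_zero_of_porous {X : Type*} [PseudoMetricSpace X] [MeasurableSpace X]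
    [BorelSpace X] [SecondCountableTopology X] (μ : Measure X) [IsUnifLocDoublingMeasure μ]
    [IsLocallyFiniteMeasure μ] {S : Set X} (K : ℝ)
    (hS : ∀ x ∈ S, ∀ r > 0, ∃ z, dist x z ≤ K * r ∧ Disjoint S (closedBall z r)) :
    μ S = 0 := by
  suffices ∀ᵐ x ∂μ, x ∉ S by simpa [ae_iff] using this
  filter_upwards [ae_imp_of_ae_restrict
    (IsUnifLocDoublingMeasure.ae_tendsto_measure_inter_div μ S K)] with x hdensity hx
  choose z hxz hdisj using fun n : ℕ => hS x hx (1 / ((n : ℝ) + 1)) Nat.one_div_pos_of_nat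
  have hradius : Tendsto (fun n : ℕ => 1 / ((n : ℝ) + 1)) atTop (𝓝[>] 0) :=
    tendsto_nhdsWithin_iff.2 ⟨tendsto_one_div_add_atTop_nhds_zero_nat,
      .of_forall fun n => mem_Ioi.2 Nat.one_div_pos_of_nat⟩
  have hone := hdensity hx z _ hradius (.of_forall hxz)
  simp only [(hdisj _).inter_eq, measure_empty, ENNReal.zero_div] at hone
  exact zero_ne_one (tendsto_nhds_unique tendsto_const_nhds hone)

namespace IsSnowflakeEmbedding

section Curve

variable {Y : Type*} [PseudoMetricSpace Y] {ε : ℝ} {f : ℝ → Y}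

theorem comp_neg (hf : IsSnowflakeEmbedding ε f) : IsSnowflakeEmbedding ε fun t => f (-t) :=
  let ⟨C, hC, h⟩ := hf
  ⟨C, hC, fun s t => by simpa only [dist_neg_neg] using h (-s) (-t)⟩

theorem exists_gt_dist_eq (hf : IsSnowflakeEmbedding ε f) (hε : 0 < ε) (t₀ : ℝ) {R : ℝ}
    (hR : 0 < R) : ∃ s > t₀, dist (f s) (f t₀) = R := by
  have htop : Tendsto (fun s => dist (f s) (f t₀)) atTop atTop :=
    (tendsto_dist_right_atTop_iff _).2 <| (hf.tendsto_cobounded hε).mono_left <| by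
      rw [IsOrderBornology.cobounded_eq]; exact le_sup_right
  have hIci := (isPreconnected_Ici (a := t₀)).intermediate_value_Ici self_mem_Ici
    (le_principal_iff.2 (Ici_mem_atTop t₀))
    (((hf.continuous hε).dist continuous_const).continuousOn) htop
  obtain ⟨s, hs, hsR⟩ := hIci (show R ∈ Ici (dist (f t₀) (f t₀)) by simpa using hR.le)
  refine ⟨s, lt_of_le_of_ne hs ?_, hsR⟩
  rintro rfl
  simp [hR.ne] at hsR

theorem exists_lt_dist_eq (hf : IsSnowflakeEmbedding ε f) (hε : 0 < ε) (t₀ : ℝ) {R : ℝ}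
    (hR : 0 < R) : ∃ s < t₀, dist (f s) (f t₀) = R := by
  obtain ⟨s, hs, hsR⟩ := hf.comp_neg.exists_gt_dist_eq hε (-t₀) hR
  exact ⟨-s, neg_lt.1 hs, by rwa [neg_neg] at hsR⟩

theorem exists_boundedTurning (hf : IsSnowflakeEmbedding ε f) (hε : 0 ≤ ε) :
    ∃ C, 0 < C ∧ ∀ r s t, r ≤ s → s ≤ t → dist (f t) (f s) ≤ C * dist (f t) (f r) := by
  obtain ⟨C, hC, h⟩ := hf
  refine ⟨C * C, by positivity, fun r s t hrs hst => ?_⟩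
  have hsub : dist t s ≤ dist t r := by
    rw [dist_eq, dist_eq, abs_of_nonneg (by linarith), abs_of_nonneg (by linarith)]
    linarith
  calc dist (f t) (f s) ≤ C * dist t s ^ ε := (h t s).1
    _ ≤ C * dist t r ^ ε := by gcongr
    _ ≤ C * (C * dist (f t) (f r)) := by gcongr; exact (h t r).2
    _ = C * C * dist (f t) (f r) := by ring

end Curve

section NormedSpace

variable {E : Type*} [NormedAddCommGroup E] [NormedSpace ℝ E] {ε : ℝ} {f : ℝ → E}

-- If every point of the sphere were close to the curve, the arcs before and after `t₀` would both
-- come close to one point of the connected sphere, hence close to each other far away from `f t₀`.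
theorem porous_range (hf : IsSnowflakeEmbedding ε f) (hε : 0 < ε)
    (hE : 1 < Module.rank ℝ E) :
    ∃ K, ∀ x ∈ range f, ∀ r > 0, ∃ z, dist x z ≤ K * r ∧ Disjoint (range f) (closedBall z r) := by
  obtain ⟨C, hC, hturn⟩ := hf.exists_boundedTurning hε.le
  refine ⟨4 * C + 2, ?_⟩
  rintro _ ⟨t₀, rfl⟩ r hr
  by_contra! hcon
  set R := (4 * C + 2) * r
  have hR0 : 0 < R := by positivity
  have hcover : sphere (f t₀) R ⊆
      thickening (2 * r) (f '' Ioi t₀) ∪ thickening (2 * r) (f '' Iio t₀) := by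
    intro z hz
    obtain ⟨_, ⟨s, rfl⟩, hs⟩ := not_disjoint_iff.1 (hcon z (mem_sphere'.1 hz).le)
    have hs2 : dist z (f s) < 2 * r := by rw [mem_closedBall'] at hs; linarith
    rcases lt_trichotomy s t₀ with hst | rfl | hst
    · exact .inr (mem_thickening_iff.2 ⟨f s, mem_image_of_mem f hst, hs2⟩)
    · nlinarith [mem_sphere.1 hz, mul_pos hC hr]
    · exact .inl (mem_thickening_iff.2 ⟨f s, mem_image_of_mem f hst, hs2⟩)
  obtain ⟨u, hu, huR⟩ := hf.exists_gt_dist_eq hε t₀ hR0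
  obtain ⟨v, hv, hvR⟩ := hf.exists_lt_dist_eq hε t₀ hR0
  obtain ⟨z, hz, hzr, hzl⟩ := isPreconnected_sphere hE (f t₀) R _ _
    isOpen_thickening isOpen_thickening hcover
    ⟨f u, huR, self_subset_thickening (by positivity) _ (mem_image_of_mem f hu)⟩
    ⟨f v, hvR, self_subset_thickening (by positivity) _ (mem_image_of_mem f hv)⟩
  obtain ⟨_, ⟨s, hs, rfl⟩, hzs⟩ := mem_thickening_iff.1 hzr
  obtain ⟨_, ⟨t, ht, rfl⟩, hzt⟩ := mem_thickening_iff.1 hzl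
  have hclose : dist (f s) (f t₀) ≤ C * (2 * r + 2 * r) :=
    (hturn t t₀ s (le_of_lt ht) (le_of_lt hs)).trans <| by
      gcongr; exact (dist_triangle_left _ _ z).trans (add_le_add hzs.le hzt.le)
  linarith [dist_triangle z (f s) (f t₀), mem_sphere.1 hz]

theorem one_lt_mul_finrank [FiniteDimensional ℝ E] (hf : IsSnowflakeEmbedding ε f)
    (hε : 0 < ε) (hε1 : ε < 1) : 1 < ε * Module.finrank ℝ E := by
  have hdim : ε⁻¹ ≤ Module.finrank ℝ E := by
    have hle := dimH_mono (subset_univ (range f))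
    rw [hf.dimH_range hε, Real.dimH_univ, Real.dimH_univ_eq_finrank, one_div,
      ← ENNReal.ofReal_inv_of_pos hε] at hle
    exact (ENNReal.ofReal_le_natCast).1 hle
  suffices ε⁻¹ ≠ Module.finrank ℝ E from (inv_lt_iff_one_lt_mul₀' hε).1 (lt_of_le_of_ne hdim this)
  intro heq
  have hrank : 1 < Module.rank ℝ E := Module.one_lt_rank_of_one_lt_finrank <| by
    exact_mod_cast heq ▸ (one_lt_inv₀ hε).2 hε1
  borelize E
  obtain ⟨K, hK⟩ := hf.porous_range hε hrank
  have hnull : μH[ε⁻¹] (range f) = 0 := heq ▸ measure_eq_zero_of_porous _ K hK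
  obtain ⟨g, C, hgf, hg⟩ := hf.exists_leftInverse_holderOnWith hε
  have hle := hg.hausdorffMeasure_image_le (Real.toNNReal_pos.2 (inv_pos.2 hε)) zero_le_one
  rw [← range_comp, hgf.comp_eq_id, range_id, hausdorffMeasure_real, mul_one,
    Real.coe_toNNReal _ (inv_pos.2 hε).le, hnull, mul_zero] at hle
  simp at hle

end NormedSpace

end IsSnowflakeEmbedding

/-! ### Snowflake pairs -/

section SnowflakePair

variable {X Y Y₁ Y₂ : Type*}

/-- `h₁` and `h₂` are the coordinates of a bi-Lipschitz embedding of `X` into the product of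
`(Y₁, dist ^ p⁻¹)` and `(Y₂, dist ^ q⁻¹)`; the inequalities are those of the two factors raised to
the powers `p` and `q`, so that they also make sense when those snowflakes are not metric. -/
def IsSnowflakePair [PseudoMetricSpace X] [PseudoMetricSpace Y₁] [PseudoMetricSpace Y₂] (p q : ℝ)
    (h₁ : X → Y₁) (h₂ : X → Y₂) : Prop :=
  ∃ C, 0 < C ∧ ∀ s t, dist (h₁ s) (h₁ t) ≤ C * dist s t ^ p ∧
    dist (h₂ s) (h₂ t) ≤ C * dist s t ^ q ∧
    (dist s t ^ p ≤ C * dist (h₁ s) (h₁ t) ∨ dist s t ^ q ≤ C * dist (h₂ s) (h₂ t))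

theorem IsSnowflakePair.isSnowflakeEmbedding_prodMk [PseudoMetricSpace X] [PseudoMetricSpace Y]
    [PseudoMetricSpace Y₁] [PseudoMetricSpace Y₂] {q δ : ℝ} {h₁ : X → Y₁} {h₂ : X → Y₂}
    {g : Y₂ → Y} (h : IsSnowflakePair (q * δ) q h₁ h₂) (hg : IsSnowflakeEmbedding δ g)
    (hδ : 0 ≤ δ) : IsSnowflakeEmbedding (q * δ) fun t => (h₁ t, g (h₂ t)) := by
  obtain ⟨C, hC, h⟩ := h
  obtain ⟨K, hK, hg⟩ := hg
  have hCK : C ^ δ * K ≤ C + C ^ δ * K := le_add_of_nonneg_left hC.le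
  have hCC : C ≤ C + C ^ δ * K := le_add_of_nonneg_right (by positivity)
  refine ⟨C + C ^ δ * K, by positivity, fun s t => ?_⟩
  obtain ⟨hup₁, hup₂, hlow⟩ := h s t
  rw [Prod.dist_eq]
  refine ⟨max_le (hup₁.trans (by gcongr)) ?_, ?_⟩
  · calc dist (g (h₂ s)) (g (h₂ t)) ≤ K * dist (h₂ s) (h₂ t) ^ δ := (hg _ _).1
      _ ≤ K * (C * dist s t ^ q) ^ δ := by gcongr
      _ = C ^ δ * K * dist s t ^ (q * δ) := by
        rw [mul_rpow hC.le (by positivity), ← rpow_mul dist_nonneg]; ring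
      _ ≤ _ := by gcongr
  rcases hlow with hlow | hlow
  · exact hlow.trans (mul_le_mul hCC (le_max_left _ _) dist_nonneg (by positivity))
  · calc dist s t ^ (q * δ) = (dist s t ^ q) ^ δ := rpow_mul dist_nonneg _ _
      _ ≤ (C * dist (h₂ s) (h₂ t)) ^ δ := by gcongr
      _ = C ^ δ * dist (h₂ s) (h₂ t) ^ δ := mul_rpow hC.le dist_nonneg
      _ ≤ C ^ δ * (K * dist (g (h₂ s)) (g (h₂ t))) := by gcongr; exact (hg _ _).2
      _ = C ^ δ * K * dist (g (h₂ s)) (g (h₂ t)) := by ring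
      _ ≤ _ := mul_le_mul hCK (le_max_right _ _) dist_nonneg (by positivity)

end SnowflakePair

section BlowDown

variable {X Y : Type*} [PseudoMetricSpace X] [PseudoMetricSpace Y]

theorem hyperfilter_nat_le_atTop : (hyperfilter ℕ : Filter ℕ) ≤ atTop :=
  Nat.cofinite_eq_atTop ▸ hyperfilter_le_cofinite

theorem exists_tendsto_hyperfilter_of_abs_le {u v : ℕ → ℝ} {b : ℝ} (huv : ∀ n, |u n| ≤ v n)
    (hv : Tendsto v atTop (𝓝 b)) : ∃ y, Tendsto u (hyperfilter ℕ) (𝓝 y) := by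
  have hbounded : ∀ᶠ n in atTop, u n ∈ closedBall (0 : ℝ) (b + 1) := by
    filter_upwards [hv.eventually_lt_const (lt_add_one b)] with n hn
    rw [mem_closedBall_zero_iff, norm_eq_abs]
    exact (huv n).trans hn.le
  obtain ⟨y, -, hy⟩ := (isCompact_closedBall (0 : ℝ) (b + 1)).ultrafilter_le_nhds'
    ((hyperfilter ℕ).map u) (hyperfilter_nat_le_atTop hbounded)
  exact ⟨y, hy⟩

/-- `σ` exhibits `Y` as a limit of the rescaled spaces `(X, dist / ρ n)`. -/
def IsBlowDown (ρ : ℕ → ℝ) (σ : ℕ → Y → X) : Prop :=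
  (∀ n, 0 ≤ ρ n) ∧
    ∀ s t, Tendsto (fun n => dist (σ n s) (σ n t) / ρ n) atTop (𝓝 (dist s t))

namespace IsBlowDown

variable {ρ : ℕ → ℝ} {σ : ℕ → Y → X} {C p q : ℝ}

theorem tendsto_rpow (hσ : IsBlowDown ρ σ) (hp : 0 ≤ p) (s t : Y) :
    Tendsto (fun n => dist (σ n s) (σ n t) ^ p / ρ n ^ p) atTop (𝓝 (dist s t ^ p)) :=
  ((hσ.2 s t).rpow_const (.inr hp)).congr fun n => div_rpow dist_nonneg (hσ.1 n) p

theorem exists_limit (hσ : IsBlowDown ρ σ) (hp : 0 ≤ p) {f : X → ℝ}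
    (hf : ∀ x y, dist (f x) (f y) ≤ C * dist x y ^ p) :
    ∃ h : Y → ℝ, ∀ s t, Tendsto (fun n => dist (f (σ n s)) (f (σ n t)) / ρ n ^ p)
      (hyperfilter ℕ) (𝓝 (dist (h s) (h t))) := by
  rcases isEmpty_or_nonempty Y with hY | ⟨⟨y₀⟩⟩
  · exact ⟨isEmptyElim, isEmptyElim⟩
  have hlim : ∀ t, ∃ y, Tendsto (fun n => (f (σ n t) - f (σ n y₀)) / ρ n ^ p)
      (hyperfilter ℕ) (𝓝 y) := fun t =>
    exists_tendsto_hyperfilter_of_abs_le (fun n => by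
      rw [abs_div, abs_of_nonneg (rpow_nonneg (hσ.1 n) p), ← mul_div_assoc]
      exact div_le_div_of_nonneg_right (hf _ _) (rpow_nonneg (hσ.1 n) p))
      ((hσ.tendsto_rpow hp t y₀).const_mul C)
  choose h hh using hlim
  refine ⟨h, fun s t => ((hh s).dist (hh t)).congr fun n => ?_⟩
  rw [dist_eq, dist_eq, ← sub_div, abs_div, abs_of_nonneg (rpow_nonneg (hσ.1 n) p),
    sub_sub_sub_cancel_right]

theorem exists_isSnowflakePair (hσ : IsBlowDown ρ σ) (hp : 0 ≤ p) (hq : 0 ≤ q) {f g : X → ℝ}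
    (hfg : IsSnowflakePair p q f g) : ∃ h₁ h₂ : Y → ℝ, IsSnowflakePair p q h₁ h₂ := by
  obtain ⟨C, hC, H⟩ := hfg
  obtain ⟨h₁, hh₁⟩ := hσ.exists_limit hp fun x y => (H x y).1
  obtain ⟨h₂, hh₂⟩ := hσ.exists_limit hq fun x y => (H x y).2.1
  have hscale : ∀ {r x y : ℝ} {n : ℕ}, x ≤ C * y → x / ρ n ^ r ≤ C * (y / ρ n ^ r) := by
    intro r x y n hxy
    rw [← mul_div_assoc]
    exact div_le_div_of_nonneg_right hxy (rpow_nonneg (hσ.1 n) r)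
  have hlim : ∀ {r : ℝ}, 0 ≤ r → ∀ s t, Tendsto
      (fun n => dist (σ n s) (σ n t) ^ r / ρ n ^ r) (hyperfilter ℕ) (𝓝 (dist s t ^ r)) :=
    fun hr s t => (hσ.tendsto_rpow hr s t).mono_left hyperfilter_nat_le_atTop
  refine ⟨h₁, h₂, C, hC, fun s t => ⟨?_, ?_, ?_⟩⟩
  · exact le_of_tendsto_of_tendsto' (hh₁ s t) ((hlim hp s t).const_mul C)
      fun n => hscale (H _ _).1
  · exact le_of_tendsto_of_tendsto' (hh₂ s t) ((hlim hq s t).const_mul C)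
      fun n => hscale (H _ _).2.1
  · have hor := Filter.Eventually.of_forall (f := (hyperfilter ℕ : Filter ℕ))
      fun n => (H (σ n s) (σ n t)).2.2
    refine (Ultrafilter.eventually_or.1 hor).imp (fun hev => ?_) fun hev => ?_
    · exact le_of_tendsto_of_tendsto (hlim hp s t) ((hh₁ s t).const_mul C)
        (hev.mono fun n hn => hscale hn)
    · exact le_of_tendsto_of_tendsto (hlim hq s t) ((hh₂ s t).const_mul C)
        (hev.mono fun n hn => hscale hn)

end IsBlowDown

theorem isBlowDown_natFloor :
    IsBlowDown (fun n => n) fun (n : ℕ) (t : ℝ) => ⌊n * t + (n : ℝ) ^ 2⌋₊ := by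
  have hsample : ∀ t : ℝ, Tendsto
      (fun n : ℕ => ((⌊n * t + (n : ℝ) ^ 2⌋₊ : ℝ) - (n : ℝ) ^ 2) / n) atTop (𝓝 t) := by
    intro t
    refine tendsto_iff_dist_tendsto_zero.2 <| squeeze_zero' (.of_forall fun n => dist_nonneg) ?_
      tendsto_one_div_atTop_nhds_zero_nat
    filter_upwards [eventually_ge_atTop ⌈|t|⌉₊, eventually_gt_atTop 0] with n hnt hn
    have hn0 : (0 : ℝ) < n := by exact_mod_cast hn
    have hnonneg : 0 ≤ n * t + (n : ℝ) ^ 2 := by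
      nlinarith [neg_abs_le t, Nat.ceil_le.1 hnt]
    have hfloor := Nat.floor_le hnonneg
    have hlt := Nat.lt_floor_add_one (n * t + (n : ℝ) ^ 2)
    rw [dist_eq, div_sub' hn0.ne', abs_div, abs_of_pos hn0]
    gcongr
    exact abs_le.2 ⟨by linarith, by linarith⟩
  refine ⟨fun n => n.cast_nonneg, fun s t => ((hsample s).dist (hsample t)).congr fun n => ?_⟩
  rw [dist_eq, ← sub_div, sub_sub_sub_cancel_right, abs_div, Nat.abs_cast, Nat.dist_eq]

end BlowDown

/-! ### Folded paths -/

/-- A walk with steps `±1` from `0` to `a` in time `M` that stays strictly between its endpoints at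
intermediate times: one coordinate of a path of diagonal steps across a box. -/
structure IsCrossing (M : ℕ) (a : ℤ) (x : ℕ → ℤ) : Prop where
  zero : x 0 = 0
  last : x M = a
  inside : ∀ i, 0 < i → i < M → 1 ≤ x i ∧ x i ≤ a - 1
  step : ∀ i < M, x (i + 1) = x i + 1 ∨ x (i + 1) = x i - 1

namespace IsCrossing

variable {M : ℕ} {a : ℤ} {x : ℕ → ℤ}

theorem pos (h : IsCrossing M a x) (hM : 2 ≤ M) : 0 < a := by
  have := h.inside 1 one_pos hM
  omega

theorem mem_Icc (h : IsCrossing M a x) (hM : 2 ≤ M) {i : ℕ} (hi : i ≤ M) : x i ∈ Icc 0 a := by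
  have := h.pos hM
  rw [Set.mem_Icc]
  rcases Nat.eq_zero_or_pos i with rfl | hi0
  · rw [h.zero]; omega
  rcases hi.eq_or_lt with rfl | hiM
  · rw [h.last]; omega
  · have := h.inside i hi0 hiM; omega

theorem one_le (h : IsCrossing M a x) (hM : 2 ≤ M) {i : ℕ} (hi0 : 0 < i) (hi : i ≤ M) :
    1 ≤ x i := by
  rcases hi.eq_or_lt with rfl | hiM
  · rw [h.last]; exact h.pos hM
  · exact (h.inside i hi0 hiM).1

theorem apply_one (h : IsCrossing M a x) (hM : 2 ≤ M) : x 1 = 1 := by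
  have hstep := h.step 0 (by omega)
  have := h.inside 1 one_pos hM
  rw [zero_add, h.zero] at hstep
  omega

theorem reverse (h : IsCrossing M a x) : IsCrossing M a fun i => a - x (M - i) where
  zero := by simp [h.last]
  last := by simp [h.zero]
  inside i hi0 hi := by have := h.inside (M - i) (by omega) (by omega); omega
  step i hi := by
    have := h.step (M - (i + 1)) (by omega)
    rw [show M - (i + 1) + 1 = M - i by omega] at this
    omega

theorem emod_two (h : IsCrossing M a x) {i : ℕ} (hi : i ≤ M) : x i % 2 = i % 2 := by
  induction i with
  | zero => simp [h.zero]
  | succ i ih =>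
    have := h.step i (by omega)
    have := ih (by omega)
    omega

end IsCrossing

/-- Side length of a box containing a folded path of depth `n`. -/
def boxSide (a : ℕ → ℤ) (n : ℕ) : ℤ := ∏ j ∈ Finset.range n, a j

theorem boxSide_succ (a : ℕ → ℤ) (n : ℕ) : boxSide a (n + 1) = boxSide a n * a n :=
  Finset.prod_range_succ _ _

/-- One coordinate of the self-similar path obtained by replacing each step of the walk `x n` by a
translated and possibly reflected copy of the path of depth `n`. It is meaningful up to time
`M ^ n`. -/
def foldedPath (M : ℕ) (a : ℕ → ℤ) (x : ℕ → ℕ → ℤ) : ℕ → ℕ → ℤ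
  | 0, i => i
  | n + 1, i => boxSide a n * x n (i / M ^ n) +
      (x n (i / M ^ n + 1) - x n (i / M ^ n)) * foldedPath M a x n (i % M ^ n)

/-- The walks `x n` cross boxes of side `a n` in time `M`, and `K` bounds the distortion between
the cumulated side lengths and the `p`-th powers of the cumulated times. -/
structure IsFolding (M : ℕ) (p K : ℝ) (a : ℕ → ℤ) (x : ℕ → ℕ → ℤ) : Prop where
  two_le : 2 ≤ M
  isCrossing : ∀ n, IsCrossing M (a n) (x n)
  pow_le : ∀ n, ((M : ℝ) ^ n) ^ p ≤ K * boxSide a n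
  le_pow : ∀ n, (boxSide a n : ℝ) ≤ K * ((M : ℝ) ^ n) ^ p

theorem exists_cell_eq {M n i : ℕ} (hM : 2 ≤ M) (hi : i ≤ M ^ (n + 1)) :
    ∃ I < M, ∃ k ≤ M ^ n, i = M ^ n * I + k := by
  have hpos : 0 < M ^ n := by positivity
  rcases hi.eq_or_lt with rfl | hlt
  · exact ⟨M - 1, by omega, M ^ n, le_rfl, by
      rw [← Nat.mul_succ, Nat.succ_eq_add_one, Nat.sub_add_cancel (by omega), pow_succ]⟩
  · exact ⟨i / M ^ n, Nat.div_lt_of_lt_mul (by rwa [← pow_succ]), i % M ^ n,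
      (Nat.mod_lt _ hpos).le, (Nat.div_add_mod _ _).symm⟩

namespace IsFolding

variable {M : ℕ} {p K : ℝ} {a : ℕ → ℤ} {x : ℕ → ℕ → ℤ}

theorem boxSide_pos (h : IsFolding M p K a x) (n : ℕ) : 0 < boxSide a n :=
  Finset.prod_pos fun j _ => (h.isCrossing j).pos h.two_le

theorem pow_pos (h : IsFolding M p K a x) (n : ℕ) : 0 < M ^ n :=
  Nat.pow_pos (two_pos.trans_le h.two_le)

theorem foldedPath_zero (h : IsFolding M p K a x) (n : ℕ) : foldedPath M a x n 0 = 0 := by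
  induction n with
  | zero => rfl
  | succ n ih => simp [foldedPath, ih, (h.isCrossing n).zero]

theorem foldedPath_pow (h : IsFolding M p K a x) (n : ℕ) :
    foldedPath M a x n (M ^ n) = boxSide a n := by
  cases n with
  | zero => simp [foldedPath, boxSide]
  | succ n =>
    rw [foldedPath, pow_succ, Nat.mul_div_cancel_left _ (h.pow_pos n), Nat.mul_mod_right,
      h.foldedPath_zero, (h.isCrossing n).last, boxSide_succ, mul_zero, add_zero]

theorem foldedPath_cell (h : IsFolding M p K a x) {n k : ℕ} (hk : k ≤ M ^ n) (I : ℕ) :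
    foldedPath M a x (n + 1) (M ^ n * I + k) =
      boxSide a n * x n I + (x n (I + 1) - x n I) * foldedPath M a x n k := by
  rcases hk.eq_or_lt with rfl | hlt
  · rw [← Nat.mul_succ, foldedPath, Nat.mul_div_cancel_left _ (h.pow_pos n), Nat.mul_mod_right,
      h.foldedPath_zero, h.foldedPath_pow]
    ring
  · rw [foldedPath, Nat.mul_add_div (h.pow_pos n), Nat.div_eq_of_lt hlt, Nat.mul_add_mod,
      Nat.mod_eq_of_lt hlt, add_zero]

theorem mul_le_foldedPath_cell (h : IsFolding M p K a x) {n k I : ℕ} {w : ℤ} (hk : k ≤ M ^ n)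
    (hmem : foldedPath M a x n k ∈ Icc 0 (boxSide a n)) (hI : w ≤ x n I) (hI' : w ≤ x n (I + 1)) :
    boxSide a n * w ≤ foldedPath M a x (n + 1) (M ^ n * I + k) := by
  rw [h.foldedPath_cell hk]
  nlinarith [mul_nonneg (sub_nonneg.2 hmem.2) (sub_nonneg.2 hI),
    mul_nonneg hmem.1 (sub_nonneg.2 hI')]

theorem foldedPath_cell_le_mul (h : IsFolding M p K a x) {n k I : ℕ} {w : ℤ} (hk : k ≤ M ^ n)
    (hmem : foldedPath M a x n k ∈ Icc 0 (boxSide a n)) (hI : x n I ≤ w) (hI' : x n (I + 1) ≤ w) :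
    foldedPath M a x (n + 1) (M ^ n * I + k) ≤ boxSide a n * w := by
  rw [h.foldedPath_cell hk]
  nlinarith [mul_nonneg (sub_nonneg.2 hmem.2) (sub_nonneg.2 hI),
    mul_nonneg hmem.1 (sub_nonneg.2 hI')]

theorem foldedPath_mem_Icc (h : IsFolding M p K a x) {n i : ℕ} (hi : i ≤ M ^ n) :
    foldedPath M a x n i ∈ Icc 0 (boxSide a n) := by
  induction n generalizing i with
  | zero =>
    have : i ≤ 1 := by simpa using hi
    simp only [foldedPath, boxSide, Finset.range_zero, Finset.prod_empty, Set.mem_Icc]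
    omega
  | succ n ih =>
    obtain ⟨I, hI, k, hk, rfl⟩ := exists_cell_eq h.two_le hi
    have hx := (h.isCrossing n).mem_Icc h.two_le hI.le
    have hx' := (h.isCrossing n).mem_Icc h.two_le (Nat.succ_le_of_lt hI)
    rw [boxSide_succ]
    exact ⟨(mul_zero (boxSide a n)).symm.le.trans (h.mul_le_foldedPath_cell hk (ih hk) hx.1 hx'.1),
      h.foldedPath_cell_le_mul hk (ih hk) hx.2 hx'.2⟩

theorem foldedPath_succ_of_le (h : IsFolding M p K a x) {n i : ℕ} (hi : i ≤ M ^ n) :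
    foldedPath M a x (n + 1) i = foldedPath M a x n i := by
  have hcell := h.foldedPath_cell hi 0
  rwa [mul_zero, zero_add, zero_add, (h.isCrossing n).zero, (h.isCrossing n).apply_one h.two_le,
    mul_zero, zero_add, sub_zero, one_mul] at hcell

theorem foldedPath_eq_of_le (h : IsFolding M p K a x) {n m i : ℕ} (hi : i ≤ M ^ n) (hnm : n ≤ m) :
    foldedPath M a x m i = foldedPath M a x n i := by
  induction m, hnm using Nat.le_induction with
  | base => rfl
  | succ m hnm ih =>
    rw [h.foldedPath_succ_of_le (hi.trans (Nat.pow_le_pow_right (by linarith [h.two_le]) hnm)), ih]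

theorem reverse (h : IsFolding M p K a x) : IsFolding M p K a fun n i => a n - x n (M - i) where
  two_le := h.two_le
  isCrossing n := (h.isCrossing n).reverse
  pow_le := h.pow_le
  le_pow := h.le_pow

theorem foldedPath_reverse (h : IsFolding M p K a x) {n i j : ℕ} (hij : i + j = M ^ n) :
    foldedPath M a (fun n i => a n - x n (M - i)) n j = boxSide a n - foldedPath M a x n i := by
  induction n generalizing i j with
  | zero =>
    simp only [pow_zero] at hij
    simp only [foldedPath, boxSide, Finset.range_zero, Finset.prod_empty]
    omega
  | succ n ih =>
    obtain ⟨I, hI, k, hk, rfl⟩ := exists_cell_eq h.two_le (hij ▸ Nat.le_add_right i j)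
    obtain ⟨J, rfl⟩ := Nat.exists_eq_add_of_lt hI
    obtain rfl : j = (I + J + 1) ^ n * J + ((I + J + 1) ^ n - k) := by
      zify [hk] at hij ⊢
      linear_combination hij
    rw [h.reverse.foldedPath_cell (Nat.sub_le _ _), h.foldedPath_cell hk,
      ih (Nat.add_sub_of_le hk), boxSide_succ]
    simp only [show I + J + 1 - J = I + 1 by omega, show I + J + 1 - (J + 1) = I by omega]
    ring

theorem one_le_const (h : IsFolding M p K a x) : 1 ≤ K := by
  simpa [boxSide] using h.pow_le 0

theorem one_le_rpow (h : IsFolding M p K a x) (hp : 0 ≤ p) : 1 ≤ (M : ℝ) ^ p :=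
  Real.one_le_rpow (by exact_mod_cast one_le_two.trans h.two_le) hp

theorem one_le_mul_rpow (h : IsFolding M p K a x) (hp : 0 ≤ p) : 1 ≤ K * (M : ℝ) ^ p :=
  one_le_mul_of_one_le_of_one_le h.one_le_const (h.one_le_rpow hp)

theorem pow_succ_rpow (M n : ℕ) (p : ℝ) :
    ((M : ℝ) ^ (n + 1)) ^ p = (M : ℝ) ^ p * ((M : ℝ) ^ n) ^ p := by
  rw [pow_succ', mul_rpow (by positivity) (by positivity)]

theorem pow_succ_rpow_le (h : IsFolding M p K a x) (n : ℕ) :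
    ((M : ℝ) ^ (n + 1)) ^ p ≤ K * (M : ℝ) ^ p * boxSide a n := by
  rw [pow_succ_rpow]
  calc (M : ℝ) ^ p * ((M : ℝ) ^ n) ^ p ≤ (M : ℝ) ^ p * (K * boxSide a n) := by
        gcongr; exact h.pow_le n
    _ = _ := by ring

theorem boxSide_succ_le (h : IsFolding M p K a x) (n : ℕ) :
    (boxSide a (n + 1) : ℝ) ≤ K * (M : ℝ) ^ p * ((M : ℝ) ^ n) ^ p := by
  rw [mul_assoc, ← pow_succ_rpow]
  exact h.le_pow (n + 1)

theorem rpow_le_foldedPath (h : IsFolding M p K a x) (hp : 0 < p) {n i : ℕ} (hi : i ≤ M ^ n) :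
    (i : ℝ) ^ p ≤ K * (M : ℝ) ^ p * foldedPath M a x n i := by
  have hc := h.one_le_mul_rpow hp.le
  induction n generalizing i with
  | zero =>
    rcases Nat.le_one_iff_eq_zero_or_eq_one.1 (by simpa using hi) with rfl | rfl
    · simp [foldedPath, zero_rpow hp.ne']
    · simpa [foldedPath] using hc
  | succ n ih =>
    rcases le_or_gt i (M ^ n) with hle | hlt
    · rw [h.foldedPath_succ_of_le hle]
      exact ih hle
    obtain ⟨I, hI, k, hk, rfl⟩ := exists_cell_eq h.two_le hi
    have hI0 : 0 < I := by
      by_contra! hI0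
      rw [Nat.le_zero.1 hI0] at hlt
      omega
    have hone := (h.isCrossing n).one_le h.two_le hI0 hI.le
    have hone' := (h.isCrossing n).one_le h.two_le I.succ_pos (Nat.succ_le_of_lt hI)
    have hle := h.mul_le_foldedPath_cell hk (h.foldedPath_mem_Icc hk) hone hone'
    rw [mul_one] at hle
    calc ((M ^ n * I + k : ℕ) : ℝ) ^ p ≤ ((M : ℝ) ^ (n + 1)) ^ p := by
          gcongr; exact_mod_cast hi
      _ ≤ K * (M : ℝ) ^ p * boxSide a n := h.pow_succ_rpow_le n
      _ ≤ _ := by gcongr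

theorem foldedPath_le_rpow (h : IsFolding M p K a x) (hp : 0 < p) {n i : ℕ} (hi : i ≤ M ^ n) :
    foldedPath M a x n i ≤ K * (M : ℝ) ^ p * (i : ℝ) ^ p := by
  have hc := h.one_le_mul_rpow hp.le
  induction n with
  | zero =>
    rcases Nat.le_one_iff_eq_zero_or_eq_one.1 (by simpa using hi) with rfl | rfl
    · simp [foldedPath, zero_rpow hp.ne']
    · simpa [foldedPath] using hc
  | succ n ih =>
    rcases le_or_gt i (M ^ n) with hle | hlt
    · rw [h.foldedPath_succ_of_le hle]
      exact ih hle
    calc (foldedPath M a x (n + 1) i : ℝ) ≤ boxSide a (n + 1) := by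
          exact_mod_cast (h.foldedPath_mem_Icc hi).2
      _ ≤ K * (M : ℝ) ^ p * ((M : ℝ) ^ n) ^ p := h.boxSide_succ_le n
      _ ≤ _ := by gcongr; exact_mod_cast hlt.le

theorem rpow_le_boxSide_sub (h : IsFolding M p K a x) (hp : 0 < p) {n i j : ℕ}
    (hij : i + j = M ^ n) :
    (j : ℝ) ^ p ≤ K * (M : ℝ) ^ p * ((boxSide a n : ℝ) - foldedPath M a x n i) := by
  have hle := h.reverse.rpow_le_foldedPath hp (hij ▸ Nat.le_add_left j i)
  rw [h.foldedPath_reverse hij] at hle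
  exact_mod_cast hle

theorem boxSide_sub_le_rpow (h : IsFolding M p K a x) (hp : 0 < p) {n i j : ℕ}
    (hij : i + j = M ^ n) :
    (boxSide a n : ℝ) - foldedPath M a x n i ≤ K * (M : ℝ) ^ p * (j : ℝ) ^ p := by
  have hle := h.reverse.foldedPath_le_rpow hp (hij ▸ Nat.le_add_left j i)
  rw [h.foldedPath_reverse hij] at hle
  exact_mod_cast hle

theorem dist_foldedPath_same_cell (h : IsFolding M p K a x) {n I k l : ℕ} (hI : I < M)
    (hk : k ≤ M ^ n) (hl : l ≤ M ^ n) :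
    dist (foldedPath M a x (n + 1) (M ^ n * I + k)) (foldedPath M a x (n + 1) (M ^ n * I + l)) =
      dist (foldedPath M a x n k) (foldedPath M a x n l) := by
  rw [h.foldedPath_cell hk, h.foldedPath_cell hl, Int.dist_eq, Int.dist_eq]
  rcases (h.isCrossing n).step I hI with hs | hs <;> simp [hs, abs_sub_comm, neg_add_eq_sub]

end IsFolding

theorem same_or_adjacent_or_far {M n i j : ℕ} (hM : 2 ≤ M) (hij : i ≤ j) (hj : j ≤ M ^ (n + 1)) :
    (∃ I < M, ∃ k l, k ≤ l ∧ l ≤ M ^ n ∧ i = M ^ n * I + k ∧ j = M ^ n * I + l) ∨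
    (∃ I k l, I + 1 < M ∧ k ≤ M ^ n ∧ l ≤ M ^ n ∧ i = M ^ n * I + k ∧ j = M ^ n * (I + 1) + l) ∨
    ∃ I J k l, I + 2 ≤ J ∧ J < M ∧ k ≤ M ^ n ∧ l ≤ M ^ n ∧ i = M ^ n * I + k ∧
      j = M ^ n * J + l := by
  obtain ⟨I, hI, k, hk, rfl⟩ := exists_cell_eq hM (hij.trans hj)
  obtain ⟨J, hJ, l, hl, rfl⟩ := exists_cell_eq hM hj
  rcases lt_trichotomy I J with h | rfl | h
  · rcases Nat.eq_or_lt_of_le h with rfl | h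
    · exact Or.inr (Or.inl ⟨I, k, l, hJ, hk, hl, rfl, rfl⟩)
    · exact Or.inr (Or.inr ⟨I, J, k, l, h, hJ, hk, hl, rfl, rfl⟩)
  · exact Or.inl ⟨I, hI, k, l, by omega, hl, rfl, rfl⟩
  · have hle : M ^ n * J + l ≤ M ^ n * I + k := by nlinarith
    exact Or.inl ⟨I, hI, k, k, le_rfl, hk, rfl, le_antisymm hle hij⟩

/-! ### Generators -/

/-- A path of `M` diagonal steps from one corner of an `a × b` box to the opposite one that visits
no point twice. -/
structure IsGenerator (M : ℕ) (a b : ℤ) (x y : ℕ → ℤ) : Prop where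
  fst : IsCrossing M a x
  snd : IsCrossing M b y
  inj : ∀ i ≤ M, ∀ j ≤ M, x i = x j → y i = y j → i = j

/-- The unit intervals traversed by the `i`-th and the `j`-th step of `x` are disjoint; this is
expressed through twice the distance of their midpoints. -/
def StepsApart (x : ℕ → ℤ) (i j : ℕ) : Prop :=
  2 < |x j + x (j + 1) - (x i + x (i + 1))|

/-- The `i`-th step of `x` ends where the interval traversed by the `j`-th step begins, on its
other side. -/
def StepTowards (x : ℕ → ℤ) (i j : ℕ) : Prop :=
  x j + x (j + 1) - (x i + x (i + 1)) = 2 * (x (i + 1) - x i)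

/-- The `i`-th step of `x` starts at an end of the interval traversed by the `j`-th step and moves
away from it. -/
def StepAway (x : ℕ → ℤ) (i j : ℕ) : Prop :=
  x j + x (j + 1) - (x i + x (i + 1)) = -2 * (x (i + 1) - x i)

theorem IsCrossing.apart_or_touch {M : ℕ} {a : ℤ} {x : ℕ → ℤ} (h : IsCrossing M a x)
    {i j u v : ℕ} (hi : i < M) (hj : j < M) (huv : (u = j ∧ v = j + 1) ∨ (u = j + 1 ∧ v = j))
    (hui : u % 2 = i % 2) : StepsApart x i j ∨
      (x i = x u ∨ StepTowards x i j) ∧ (x (i + 1) = x v ∨ StepAway x i j) := by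
  have := h.step i hi
  have := h.step j hj
  have := h.emod_two hi.le
  have := h.emod_two hj.le
  simp only [StepsApart, StepTowards, StepAway, lt_abs]
  rcases huv with ⟨rfl, rfl⟩ | ⟨rfl, rfl⟩ <;> omega

namespace IsGenerator

variable {M : ℕ} {a b : ℤ} {x y : ℕ → ℤ}

theorem step_eq_or_step_eq (h : IsGenerator M a b x y) {i : ℕ} (hi : i + 1 < M) :
    x (i + 2) - x (i + 1) = x (i + 1) - x i ∨ y (i + 2) - y (i + 1) = y (i + 1) - y i := by
  have hinj := h.inj i (by omega) (i + 2) hi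
  have := h.fst.step i (by omega)
  have := h.fst.step (i + 1) hi
  have := h.snd.step i (by omega)
  have := h.snd.step (i + 1) hi
  grind

theorem apart_or_towards_away (h : IsGenerator M a b x y) {i j : ℕ} (hij : i + 2 ≤ j)
    (hj : j < M) : StepsApart x i j ∨ StepsApart y i j ∨ (StepTowards x i j ∧ StepAway y i j) ∨
      (StepAway x i j ∧ StepTowards y i j) := by
  -- The coordinates of `x` and `y` at time `i` have the parity of `i`, so two unit squares crossed
  -- by the path can only touch at the vertices `i`, `u` or at the vertices `i + 1`, `v`.
  obtain ⟨u, v, huv, hui⟩ : ∃ u v, ((u = j ∧ v = j + 1) ∨ (u = j + 1 ∧ v = j)) ∧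
      u % 2 = i % 2 := by
    rcases Nat.even_or_odd (i + j) with heven | hodd
    · exact ⟨j, j + 1, by grind⟩
    · exact ⟨j + 1, j, by grind⟩
  have hu : ¬(x i = x u ∧ y i = y u) := fun he => by
    have := h.inj i (by omega) u (by omega) he.1 he.2
    omega
  have hv : ¬(x (i + 1) = x v ∧ y (i + 1) = y v) := fun he => by
    have := h.inj (i + 1) (by omega) v (by omega) he.1 he.2
    omega
  have hx := h.fst.apart_or_touch (by omega) hj huv hui
  have hy := h.snd.apart_or_touch (by omega) hj huv hui
  have hx_step := h.fst.step i (by omega)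
  have hy_step := h.snd.step i (by omega)
  have hx_not : ¬(StepTowards x i j ∧ StepAway x i j) := by grind [StepTowards, StepAway]
  have hy_not : ¬(StepTowards y i j ∧ StepAway y i j) := by grind [StepTowards, StepAway]
  grind only

end IsGenerator

theorem dist_adjacent_cells {c d k l : ℕ} (hk : k ≤ c) :
    dist (c * d + k) (c * (d + 1) + l) = ((c - k : ℕ) : ℝ) + l := by
  rw [Nat.dist_eq, abs_sub_comm, abs_of_nonneg] <;> push_cast [Nat.cast_sub hk]
  · ring
  · have : (k : ℝ) ≤ c := by exact_mod_cast hk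
    nlinarith [l.cast_nonneg (α := ℝ)]

theorem le_dist_cells {c I J k l : ℕ} (hIJ : I + 2 ≤ J) (hk : k ≤ c) :
    (c : ℝ) ≤ dist (c * I + k) (c * J + l) := by
  have hle : c * I + k + c ≤ c * J + l := by nlinarith
  rw [Nat.dist_eq, abs_sub_comm]
  refine (le_sub_iff_add_le'.2 ?_).trans (le_abs_self _)
  exact_mod_cast hle

theorem dist_nat_le_of_le {m i j : ℕ} (hi : i ≤ m) (hj : j ≤ m) : dist i j ≤ m := by
  rw [Nat.dist_eq, abs_sub_le_iff]
  have hi : (i : ℝ) ≤ m := by exact_mod_cast hi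
  have hj : (j : ℝ) ≤ m := by exact_mod_cast hj
  constructor <;> linarith [i.cast_nonneg (α := ℝ), j.cast_nonneg (α := ℝ)]

namespace IsFolding

variable {M : ℕ} {p K : ℝ} {a : ℕ → ℤ} {x : ℕ → ℕ → ℤ} {n I J k l : ℕ}

theorem dist_foldedPath_le_boxSide (h : IsFolding M p K a x) {i j : ℕ} (hi : i ≤ M ^ n)
    (hj : j ≤ M ^ n) : dist (foldedPath M a x n i) (foldedPath M a x n j) ≤ boxSide a n := by
  have hi := h.foldedPath_mem_Icc hi
  have hj := h.foldedPath_mem_Icc hj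
  rw [Int.dist_eq']
  exact_mod_cast abs_sub_le_iff.2 ⟨by linarith [hi.2, hj.1], by linarith [hi.1, hj.2]⟩

theorem dist_foldedPath_adjacent_le (h : IsFolding M p K a x) (hI : I + 1 < M) (hk : k ≤ M ^ n)
    (hl : l ≤ M ^ n) :
    dist (foldedPath M a x (n + 1) (M ^ n * I + k))
      (foldedPath M a x (n + 1) (M ^ n * (I + 1) + l)) ≤
      ((boxSide a n : ℝ) - foldedPath M a x n k) + foldedPath M a x n l := by
  have hcorner : M ^ n * I + M ^ n = M ^ n * (I + 1) + 0 := by ring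
  refine (dist_triangle _ (foldedPath M a x (n + 1) (M ^ n * I + M ^ n)) _).trans
    (add_le_add ?_ ?_)
  · rw [h.dist_foldedPath_same_cell (by omega) hk le_rfl, h.foldedPath_pow, dist_comm,
      Int.dist_eq, abs_of_nonneg (by exact_mod_cast sub_nonneg.2 (h.foldedPath_mem_Icc hk).2)]
  · rw [hcorner, h.dist_foldedPath_same_cell hI (Nat.zero_le _) hl, h.foldedPath_zero, dist_comm,
      Int.dist_eq, Int.cast_zero, sub_zero,
      abs_of_nonneg (by exact_mod_cast (h.foldedPath_mem_Icc hl).1)]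

theorem dist_foldedPath_le (h : IsFolding M p K a x) (hp : 0 < p) {i j : ℕ} (hij : i ≤ j)
    (hj : j ≤ M ^ n) : dist (foldedPath M a x n i) (foldedPath M a x n j) ≤
      2 * (K * (M : ℝ) ^ p) * dist i j ^ p := by
  have hC := h.one_le_mul_rpow hp.le
  induction n generalizing i j with
  | zero =>
    have hd : dist (i : ℤ) j = dist i j := rfl
    simp only [foldedPath, hd]
    rcases hij.eq_or_lt with rfl | hlt
    · simp [zero_rpow hp.ne']
    · obtain ⟨rfl, rfl⟩ : i = 0 ∧ j = 1 := by rw [pow_zero] at hj; omega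
      simp only [Nat.dist_eq, Nat.cast_zero, Nat.cast_one, zero_sub, abs_neg, abs_one, one_rpow]
      linarith
  | succ n ih =>
    rcases same_or_adjacent_or_far h.two_le hij hj with ⟨I, hI, k, l, hkl, hl, rfl, rfl⟩ |
      ⟨I, k, l, hI, hk, hl, rfl, rfl⟩ | ⟨I, J, k, l, hIJ, -, hk, -, rfl, rfl⟩
    · rw [h.dist_foldedPath_same_cell hI (hkl.trans hl) hl]
      simpa [Nat.dist_eq] using ih hkl hl
    · rw [dist_adjacent_cells hk]
      calc _ ≤ ((boxSide a n : ℝ) - foldedPath M a x n k) + foldedPath M a x n l :=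
            h.dist_foldedPath_adjacent_le hI hk hl
        _ ≤ K * (M : ℝ) ^ p * ((M ^ n - k : ℕ) : ℝ) ^ p + K * (M : ℝ) ^ p * (l : ℝ) ^ p :=
            add_le_add (h.boxSide_sub_le_rpow hp (Nat.add_sub_of_le hk))
              (h.foldedPath_le_rpow hp hl)
        _ ≤ K * (M : ℝ) ^ p * (((M ^ n - k : ℕ) : ℝ) + l) ^ p +
            K * (M : ℝ) ^ p * (((M ^ n - k : ℕ) : ℝ) + l) ^ p := by
          gcongr <;> simp
        _ = _ := by ring
    · have hfar : ((M : ℝ) ^ n) ≤ dist (M ^ n * I + k) (M ^ n * J + l) := by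
        exact_mod_cast le_dist_cells (l := l) hIJ hk
      calc _ ≤ (boxSide a (n + 1) : ℝ) := h.dist_foldedPath_le_boxSide (hij.trans hj) hj
        _ ≤ K * (M : ℝ) ^ p * ((M : ℝ) ^ n) ^ p := h.boxSide_succ_le n
        _ ≤ K * (M : ℝ) ^ p * dist (M ^ n * I + k) (M ^ n * J + l) ^ p := by gcongr
        _ ≤ _ := by
          rw [mul_assoc 2]
          exact le_mul_of_one_le_left (by positivity) one_le_two

theorem rpow_le_mul_of_le_mul (h : IsFolding M p K a x) (hp : 0 < p) {d u t : ℝ} (hd : 0 ≤ d)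
    (hdu : d ≤ 2 * M * u) (hut : u ^ p ≤ K * (M : ℝ) ^ p * t) :
    d ^ p ≤ (2 * M) ^ p * (K * (M : ℝ) ^ p) * t := by
  have hM : (0 : ℝ) < M := by exact_mod_cast two_pos.trans_le h.two_le
  have hu : 0 ≤ u := nonneg_of_mul_nonneg_right (hd.trans hdu) (by positivity)
  calc d ^ p ≤ (2 * M * u) ^ p := by gcongr
    _ = (2 * M) ^ p * u ^ p := mul_rpow (by positivity) hu
    _ ≤ (2 * M) ^ p * (K * (M : ℝ) ^ p * t) := by gcongr
    _ = _ := by ring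

theorem boxSide_le_dist_of_apart (h : IsFolding M p K a x) (hI : I < M) (hJ : J < M)
    (hk : k ≤ M ^ n) (hl : l ≤ M ^ n) (hapart : StepsApart (x n) I J) :
    boxSide a n ≤ dist (foldedPath M a x (n + 1) (M ^ n * I + k))
      (foldedPath M a x (n + 1) (M ^ n * J + l)) := by
  have hpos := h.boxSide_pos n
  obtain ⟨hk0, hk1⟩ := h.foldedPath_mem_Icc hk
  obtain ⟨hl0, hl1⟩ := h.foldedPath_mem_Icc hl
  rw [dist_comm, Int.dist_eq', h.foldedPath_cell hk, h.foldedPath_cell hl, Int.cast_le]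
  have hsI := (h.isCrossing n).step I hI
  have hsJ := (h.isCrossing n).step J hJ
  rw [StepsApart, lt_abs] at hapart
  rw [le_abs]
  refine hapart.imp (fun hlt => ?_) fun hlt => ?_
  · have h4 : 4 ≤ x n J + x n (J + 1) - (x n I + x n (I + 1)) := by omega
    have := mul_le_mul_of_nonneg_left h4 hpos.le
    rcases hsI with hsI | hsI <;> rcases hsJ with hsJ | hsJ <;>
      simp only [hsI, hsJ] at this ⊢ <;> linarith
  · have h4 : 4 ≤ -(x n J + x n (J + 1) - (x n I + x n (I + 1))) := by omega
    have := mul_le_mul_of_nonneg_left h4 hpos.le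
    rcases hsI with hsI | hsI <;> rcases hsJ with hsJ | hsJ <;>
      simp only [hsI, hsJ] at this ⊢ <;> linarith

theorem boxSide_sub_le_dist_of_towards (h : IsFolding M p K a x) (hI : I < M) (hJ : J < M)
    (hk : k ≤ M ^ n) (hl : l ≤ M ^ n) (htowards : StepTowards (x n) I J) :
    (boxSide a n : ℝ) - foldedPath M a x n k ≤ dist (foldedPath M a x (n + 1) (M ^ n * I + k))
      (foldedPath M a x (n + 1) (M ^ n * J + l)) := by
  obtain ⟨hl0, hl1⟩ := h.foldedPath_mem_Icc hl
  have hmul := congrArg (boxSide a n * ·) htowards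
  rw [dist_comm, Int.dist_eq', h.foldedPath_cell hk, h.foldedPath_cell hl]
  rw [← Int.cast_sub, Int.cast_le, le_abs]
  rcases (h.isCrossing n).step I hI with hsI | hsI <;>
    rcases (h.isCrossing n).step J hJ with hsJ | hsJ <;> simp only [hsI, hsJ] at hmul ⊢
  exacts
    [Or.inl (by linarith), Or.inl (by linarith), Or.inr (by linarith), Or.inr (by linarith)]

theorem foldedPath_le_dist_of_away (h : IsFolding M p K a x) (hI : I < M) (hJ : J < M)
    (hk : k ≤ M ^ n) (hl : l ≤ M ^ n) (haway : StepAway (x n) I J) :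
    foldedPath M a x n k ≤ dist (foldedPath M a x (n + 1) (M ^ n * I + k))
      (foldedPath M a x (n + 1) (M ^ n * J + l)) := by
  obtain ⟨hl0, hl1⟩ := h.foldedPath_mem_Icc hl
  have hmul := congrArg (boxSide a n * ·) haway
  rw [dist_comm, Int.dist_eq', h.foldedPath_cell hk, h.foldedPath_cell hl]
  rw [Int.cast_le, le_abs]
  rcases (h.isCrossing n).step I hI with hsI | hsI <;>
    rcases (h.isCrossing n).step J hJ with hsJ | hsJ <;> simp only [hsI, hsJ] at hmul ⊢
  exacts
    [Or.inr (by linarith), Or.inr (by linarith), Or.inl (by linarith), Or.inl (by linarith)]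

theorem dist_foldedPath_adjacent_of_step_eq (h : IsFolding M p K a x) (hI : I + 1 < M)
    (hk : k ≤ M ^ n) (hl : l ≤ M ^ n)
    (hstep : x n (I + 2) - x n (I + 1) = x n (I + 1) - x n I) :
    dist (foldedPath M a x (n + 1) (M ^ n * I + k))
      (foldedPath M a x (n + 1) (M ^ n * (I + 1) + l)) =
      ((boxSide a n : ℝ) - foldedPath M a x n k) + foldedPath M a x n l := by
  have hk1 := (h.foldedPath_mem_Icc hk).2
  have hl0 := (h.foldedPath_mem_Icc hl).1
  have hnonneg : 0 ≤ boxSide a n - foldedPath M a x n k + foldedPath M a x n l := by linarith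
  have hdiff : foldedPath M a x (n + 1) (M ^ n * (I + 1) + l) -
      foldedPath M a x (n + 1) (M ^ n * I + k) =
      (x n (I + 1) - x n I) * (boxSide a n - foldedPath M a x n k + foldedPath M a x n l) := by
    rw [h.foldedPath_cell hk, h.foldedPath_cell hl, hstep]
    ring
  have hunit : |x n (I + 1) - x n I| = 1 := by
    rcases (h.isCrossing n).step I (by omega) with hs | hs <;> simp [hs]
  rw [dist_comm, Int.dist_eq', hdiff, abs_mul, hunit, one_mul, abs_of_nonneg hnonneg]
  push_cast
  ring

theorem rpow_dist_le_of_adjacent (h : IsFolding M p K a x) (hp : 0 < p) (hI : I + 1 < M)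
    (hk : k ≤ M ^ n) (hl : l ≤ M ^ n)
    (hstep : x n (I + 2) - x n (I + 1) = x n (I + 1) - x n I) :
    dist (M ^ n * I + k) (M ^ n * (I + 1) + l) ^ p ≤ (2 * M) ^ p * (K * (M : ℝ) ^ p) *
      dist (foldedPath M a x (n + 1) (M ^ n * I + k))
        (foldedPath M a x (n + 1) (M ^ n * (I + 1) + l)) := by
  have hC := h.one_le_mul_rpow hp.le
  have hM : (1 : ℝ) ≤ M := by exact_mod_cast one_le_two.trans h.two_le
  have hk1 : (foldedPath M a x n k : ℝ) ≤ boxSide a n := by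
    exact_mod_cast (h.foldedPath_mem_Icc hk).2
  have hl0 : (0 : ℝ) ≤ foldedPath M a x n l := by exact_mod_cast (h.foldedPath_mem_Icc hl).1
  rw [h.dist_foldedPath_adjacent_of_step_eq hI hk hl hstep, dist_adjacent_cells hk]
  rcases le_total (M ^ n - k) l with hle | hle
  · refine h.rpow_le_mul_of_le_mul (u := l) hp (by positivity) ?_
      ((h.rpow_le_foldedPath hp hl).trans (by gcongr; linarith))
    have hle : ((M ^ n - k : ℕ) : ℝ) ≤ l := by exact_mod_cast hle
    nlinarith [l.cast_nonneg (α := ℝ)]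
  · refine h.rpow_le_mul_of_le_mul (u := (M ^ n - k : ℕ)) hp (by positivity) ?_
      ((h.rpow_le_boxSide_sub hp (Nat.add_sub_of_le hk)).trans (by gcongr; linarith))
    have hle : (l : ℝ) ≤ ((M ^ n - k : ℕ) : ℝ) := by exact_mod_cast hle
    nlinarith [l.cast_nonneg (α := ℝ)]

theorem rpow_le_of_apart (h : IsFolding M p K a x) (hp : 0 < p) (hI : I < M) (hJ : J < M)
    (hk : k ≤ M ^ n) (hl : l ≤ M ^ n) (hapart : StepsApart (x n) I J) {d : ℝ} (hd : 0 ≤ d)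
    (hdM : d ≤ M ^ (n + 1)) : d ^ p ≤ (2 * M) ^ p * (K * (M : ℝ) ^ p) *
      dist (foldedPath M a x (n + 1) (M ^ n * I + k))
        (foldedPath M a x (n + 1) (M ^ n * J + l)) := by
  have hC := h.one_le_mul_rpow hp.le
  refine h.rpow_le_mul_of_le_mul (u := M ^ n) hp hd
    (hdM.trans (by rw [pow_succ']; gcongr; linarith [M.cast_nonneg (α := ℝ)])) ?_
  calc ((M : ℝ) ^ n) ^ p ≤ K * boxSide a n := h.pow_le n
    _ ≤ K * (M : ℝ) ^ p * boxSide a n := by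
      gcongr
      · exact_mod_cast (h.boxSide_pos n).le
      · exact le_mul_of_one_le_right (zero_le_one.trans h.one_le_const) (h.one_le_rpow hp.le)
    _ ≤ _ := by gcongr; exact h.boxSide_le_dist_of_apart hI hJ hk hl hapart

theorem rpow_le_of_towards_away {q L : ℝ} {b : ℕ → ℤ} {y : ℕ → ℕ → ℤ} (hx : IsFolding M p K a x)
    (hy : IsFolding M q L b y) (hp : 0 < p) (hq : 0 < q) (hI : I < M) (hJ : J < M)
    (hk : k ≤ M ^ n) (hl : l ≤ M ^ n) (htowards : StepTowards (x n) I J)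
    (haway : StepAway (y n) I J) {d : ℝ} (hd : 0 ≤ d) (hdM : d ≤ M ^ (n + 1)) :
    d ^ p ≤ (2 * M) ^ p * (K * (M : ℝ) ^ p) *
      dist (foldedPath M a x (n + 1) (M ^ n * I + k))
        (foldedPath M a x (n + 1) (M ^ n * J + l)) ∨
    d ^ q ≤ (2 * M) ^ q * (L * (M : ℝ) ^ q) *
      dist (foldedPath M b y (n + 1) (M ^ n * I + k))
        (foldedPath M b y (n + 1) (M ^ n * J + l)) := by
  have hC := hx.one_le_mul_rpow hp.le
  have hD := hy.one_le_mul_rpow hq.le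
  have hd_le {u : ℕ} (hu : M ^ n ≤ 2 * u) : d ≤ 2 * M * u := by
    calc d ≤ M * M ^ n := by rwa [← pow_succ']
      _ ≤ M * (2 * u) := by gcongr; exact_mod_cast hu
      _ = 2 * M * u := by ring
  rcases (by omega : M ^ n ≤ 2 * (M ^ n - k) ∨ M ^ n ≤ 2 * k) with hle | hle
  · exact Or.inl (hx.rpow_le_mul_of_le_mul hp hd (hd_le hle)
      ((hx.rpow_le_boxSide_sub hp (Nat.add_sub_of_le hk)).trans
        (by gcongr; exact hx.boxSide_sub_le_dist_of_towards hI hJ hk hl htowards)))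
  · exact Or.inr (hy.rpow_le_mul_of_le_mul hq hd (hd_le hle)
      ((hy.rpow_le_foldedPath hq hk).trans
        (by gcongr; exact hy.foldedPath_le_dist_of_away hI hJ hk hl haway)))

end IsFolding

theorem IsGenerator.rpow_dist_le {M : ℕ} {p q K L : ℝ} {a b : ℕ → ℤ} {x y : ℕ → ℕ → ℤ}
    (hxy : ∀ n, IsGenerator M (a n) (b n) (x n) (y n)) (hx : IsFolding M p K a x)
    (hy : IsFolding M q L b y) (hp : 0 < p) (hq : 0 < q) {n i j : ℕ} (hij : i ≤ j)
    (hj : j ≤ M ^ n) :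
    dist i j ^ p ≤ (2 * M) ^ p * (K * (M : ℝ) ^ p) *
      dist (foldedPath M a x n i) (foldedPath M a x n j) ∨
    dist i j ^ q ≤ (2 * M) ^ q * (L * (M : ℝ) ^ q) *
      dist (foldedPath M b y n i) (foldedPath M b y n j) := by
  induction n generalizing i j with
  | zero =>
    have hC := hx.one_le_mul_rpow hp.le
    have hM : (1 : ℝ) ≤ M := by exact_mod_cast one_le_two.trans hx.two_le
    have hdist : dist (i : ℤ) j = dist i j := rfl
    simp only [foldedPath, hdist]
    refine Or.inl (hx.rpow_le_mul_of_le_mul (u := dist i j) hp dist_nonneg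
      (le_mul_of_one_le_left dist_nonneg (by linarith)) ?_)
    rcases hij.eq_or_lt with rfl | hlt
    · simp [zero_rpow hp.ne']
    · obtain ⟨rfl, rfl⟩ : i = 0 ∧ j = 1 := by rw [pow_zero] at hj; omega
      simpa [Nat.dist_eq] using hC
  | succ n ih =>
    have hdM : dist i j ≤ (M : ℝ) ^ (n + 1) := by
      exact_mod_cast dist_nat_le_of_le (hij.trans hj) hj
    rcases same_or_adjacent_or_far hx.two_le hij hj with ⟨I, hI, k, l, hkl, hl, rfl, rfl⟩ |
      ⟨I, k, l, hI, hk, hl, rfl, rfl⟩ | ⟨I, J, k, l, hIJ, hJ, hk, hl, rfl, rfl⟩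
    · rw [hx.dist_foldedPath_same_cell hI (hkl.trans hl) hl,
        hy.dist_foldedPath_same_cell hI (hkl.trans hl) hl]
      simpa [Nat.dist_eq] using ih hkl hl
    · exact ((hxy n).step_eq_or_step_eq hI).imp (hx.rpow_dist_le_of_adjacent hp hI hk hl)
        (hy.rpow_dist_le_of_adjacent hq hI hk hl)
    · rcases (hxy n).apart_or_towards_away hIJ hJ with hapart | hapart | hturn | hturn
      · exact Or.inl (hx.rpow_le_of_apart hp (by omega) hJ hk hl hapart dist_nonneg hdM)
      · exact Or.inr (hy.rpow_le_of_apart hq (by omega) hJ hk hl hapart dist_nonneg hdM)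
      · exact hx.rpow_le_of_towards_away hy hp hq (by omega) hJ hk hl hturn.1 hturn.2 dist_nonneg
          hdM
      · exact (hy.rpow_le_of_towards_away hx hq hp (by omega) hJ hk hl hturn.2 hturn.1 dist_nonneg
          hdM).symm

theorem IsGenerator.isSnowflakePair {M : ℕ} {p q K L : ℝ} {a b : ℕ → ℤ} {x y : ℕ → ℕ → ℤ}
    (hxy : ∀ n, IsGenerator M (a n) (b n) (x n) (y n)) (hx : IsFolding M p K a x)
    (hy : IsFolding M q L b y) (hp : 0 < p) (hq : 0 < q) :
    IsSnowflakePair p q (fun i => (foldedPath M a x i i : ℝ))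
      fun i => (foldedPath M b y i i : ℝ) := by
  have hKM := hx.one_le_mul_rpow hp.le
  have hLM := hy.one_le_mul_rpow hq.le
  set A := 2 * (K * (M : ℝ) ^ p)
  set B := 2 * (L * (M : ℝ) ^ q)
  set A' := (2 * M : ℝ) ^ p * (K * (M : ℝ) ^ p)
  set B' := (2 * M : ℝ) ^ q * (L * (M : ℝ) ^ q)
  have hA' : 0 ≤ A' := by positivity
  have hB' : 0 ≤ B' := by positivity
  refine ⟨A + B + A' + B', by positivity, ?_⟩
  suffices h : ∀ i j : ℕ, i ≤ j → _ by
    intro i j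
    rcases le_total i j with hij | hij
    · exact h i j hij
    · simpa only [dist_comm] using h j i hij
  intro i j hij
  have hi := Nat.lt_pow_self hx.two_le (n := i)
  have hj := Nat.lt_pow_self hx.two_le (n := j)
  simp only [Int.dist_cast_real]
  rw [← hx.foldedPath_eq_of_le hi.le hij, ← hy.foldedPath_eq_of_le hi.le hij]
  refine ⟨(hx.dist_foldedPath_le hp hij hj.le).trans ?_,
    (hy.dist_foldedPath_le hq hij hj.le).trans ?_,
    (IsGenerator.rpow_dist_le hxy hx hy hp hq hij hj.le).imp (fun h => h.trans ?_)
      fun h => h.trans ?_⟩ <;> gcongr <;> linarith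

/-! ### Serpentine generators -/

section Serpentine

variable {R H V Z : ℕ}

/-- First coordinate of a path of diagonal steps: after one step it climbs up and down `2 * R`
zigzag legs of height `H` and width `2`, side by side, and then goes up by a zigzag of length `V`,
to the right by a zigzag of length `Z`, and finally straight along the diagonal. -/
def serpentineFst (R H V : ℕ) : ℕ → ℤ
  | 0 => 0
  | i + 1 =>
    if i < H * (2 * R) then 1 + 2 * (i / H : ℕ) + (i % H % 2 : ℕ)
    else
      let j := i - H * (2 * R)
      1 + 4 * R + if j < V then ((j % 2 : ℕ) : ℤ) else j - V

/-- Second coordinate of the path described at `serpentineFst`. -/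
def serpentineSnd (R H V Z : ℕ) : ℕ → ℤ
  | 0 => 0
  | i + 1 =>
    if i < H * (2 * R) then 1 + if i / H % 2 = 0 then ((i % H : ℕ) : ℤ) else H - (i % H : ℕ)
    else
      let j := i - H * (2 * R)
      1 + if j < V then (j : ℤ) else if j < V + Z then V + ((j - V) % 2 : ℕ) else j - Z

theorem leg_lt_legs {r k : ℕ} (hr : r < 2 * R) (hk : k < H) : H * r + k < H * (2 * R) := by
  nlinarith

theorem serpentineFst_leg {r k : ℕ} (hr : r < 2 * R) (hk : k < H) :
    serpentineFst R H V (H * r + k + 1) = 1 + 2 * r + (k % 2 : ℕ) := by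
  rw [serpentineFst, if_pos (leg_lt_legs hr hk), Nat.mul_add_div (by omega), Nat.div_eq_of_lt hk,
    Nat.mul_add_mod, Nat.mod_eq_of_lt hk, add_zero]

theorem serpentineSnd_leg {r k : ℕ} (hr : r < 2 * R) (hk : k < H) :
    serpentineSnd R H V Z (H * r + k + 1) = 1 + if r % 2 = 0 then (k : ℤ) else H - k := by
  rw [serpentineSnd, if_pos (leg_lt_legs hr hk), Nat.mul_add_div (by omega), Nat.div_eq_of_lt hk,
    Nat.mul_add_mod, Nat.mod_eq_of_lt hk, add_zero]

theorem serpentineFst_tail (j : ℕ) : serpentineFst R H V (H * (2 * R) + j + 1) =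
    1 + 4 * R + if j < V then ((j % 2 : ℕ) : ℤ) else j - V := by
  rw [serpentineFst, if_neg (by omega), Nat.add_sub_cancel_left]

theorem serpentineSnd_tail (j : ℕ) : serpentineSnd R H V Z (H * (2 * R) + j + 1) =
    1 + if j < V then (j : ℤ) else if j < V + Z then V + ((j - V) % 2 : ℕ) else j - Z := by
  rw [serpentineSnd, if_neg (by omega), Nat.add_sub_cancel_left]

theorem zero_or_leg_or_tail (R : ℕ) (hH : 0 < H) (i : ℕ) :
    i = 0 ∨ (∃ r k, r < 2 * R ∧ k < H ∧ i = H * r + k + 1) ∨ ∃ j, i = H * (2 * R) + j + 1 := by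
  rcases i with _ | i
  · exact Or.inl rfl
  rcases lt_or_ge i (H * (2 * R)) with hi | hi
  · exact Or.inr <| Or.inl ⟨i / H, i % H, Nat.div_lt_of_lt_mul hi, Nat.mod_lt _ hH,
      by rw [Nat.div_add_mod]⟩
  · exact Or.inr <| Or.inr ⟨i - H * (2 * R), by omega⟩

theorem serpentine_leg_end {r : ℕ} (hr : r < 2 * R) (hH : 0 < H) :
    serpentineFst R H V (H * (r + 1) + 1) = 1 + 2 * (r + 1) ∧
      serpentineSnd R H V Z (H * (r + 1) + 1) = 1 + if r % 2 = 0 then (H : ℤ) else 0 := by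
  rcases (Nat.succ_le_of_lt hr).lt_or_eq with hlt | heq
  · have hfst := serpentineFst_leg (V := V) hlt hH
    have hsnd := serpentineSnd_leg (V := V) (Z := Z) hlt hH
    rw [add_zero] at hfst hsnd
    rw [hfst, hsnd]
    refine ⟨by push_cast; omega, ?_⟩
    split_ifs <;> omega
  · have hfst := serpentineFst_tail (R := R) (H := H) (V := V) 0
    have hsnd := serpentineSnd_tail (R := R) (H := H) (V := V) (Z := Z) 0
    rw [add_zero, ← heq] at hfst hsnd
    rw [hfst, hsnd]
    refine ⟨by split_ifs <;> omega, ?_⟩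
    split_ifs <;> omega

theorem serpentine_step (hR : 0 < R) (hH : 0 < H) (hH2 : Even H) (hV : Even V) (hZ : Even Z)
    (i : ℕ) :
    (serpentineFst R H V (i + 1) = serpentineFst R H V i + 1 ∨
      serpentineFst R H V (i + 1) = serpentineFst R H V i - 1) ∧
    (serpentineSnd R H V Z (i + 1) = serpentineSnd R H V Z i + 1 ∨
      serpentineSnd R H V Z (i + 1) = serpentineSnd R H V Z i - 1) := by
  rw [Nat.even_iff] at hH2 hV hZ
  rcases zero_or_leg_or_tail R hH i with rfl | ⟨r, k, hr, hk, rfl⟩ | ⟨j, rfl⟩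
  · have hfst := serpentineFst_leg (V := V) (r := 0) (by omega : 0 < 2 * R) hH
    have hsnd := serpentineSnd_leg (V := V) (Z := Z) (r := 0) (by omega : 0 < 2 * R) hH
    simp only [mul_zero, zero_add] at hfst hsnd ⊢
    rw [hfst, hsnd]
    simp [serpentineFst, serpentineSnd]
  · rw [serpentineFst_leg hr hk, serpentineSnd_leg hr hk]
    rcases (Nat.succ_le_of_lt hk).lt_or_eq with hlt | heq
    · rw [show H * r + k + 1 + 1 = H * r + (k + 1) + 1 by ring, serpentineFst_leg hr hlt,
        serpentineSnd_leg hr hlt]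
      split_ifs <;> omega
    · obtain ⟨hfst, hsnd⟩ := serpentine_leg_end (V := V) (Z := Z) hr hH
      rw [show H * r + k + 1 + 1 = H * (r + 1) + 1 by rw [mul_add]; omega, hfst, hsnd]
      split_ifs <;> omega
  · rw [show H * (2 * R) + j + 1 + 1 = H * (2 * R) + (j + 1) + 1 by ring, serpentineFst_tail,
      serpentineFst_tail, serpentineSnd_tail, serpentineSnd_tail]
    constructor <;> split_ifs <;> omega

theorem one_le_serpentineFst_leg {r k : ℕ} (hr : r < 2 * R) (hk : k < H) :
    1 ≤ serpentineFst R H V (H * r + k + 1) ∧ serpentineFst R H V (H * r + k + 1) ≤ 4 * R := by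
  rw [serpentineFst_leg hr hk]
  omega

theorem le_serpentineFst_tail (j : ℕ) : 1 + 4 * R ≤ serpentineFst R H V (H * (2 * R) + j + 1) := by
  rw [serpentineFst_tail]
  split_ifs <;> omega

theorem serpentine_injective (hH : 0 < H) {i j : ℕ}
    (hfst : serpentineFst R H V i = serpentineFst R H V j)
    (hsnd : serpentineSnd R H V Z i = serpentineSnd R H V Z j) : i = j := by
  wlog hij : i ≤ j
  · exact (this hH hfst.symm hsnd.symm (le_of_not_ge hij)).symm
  have hzero : serpentineFst R H V 0 = 0 := rfl
  rcases zero_or_leg_or_tail R hH i with rfl | ⟨r, k, hr, hk, rfl⟩ | ⟨k, rfl⟩ <;>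
    rcases zero_or_leg_or_tail R hH j with rfl | ⟨r', k', hr', hk', rfl⟩ | ⟨k', rfl⟩
  case inl.inl => rfl
  case inl.inr.inl => have := one_le_serpentineFst_leg (V := V) hr' hk'; omega
  case inl.inr.inr => have := le_serpentineFst_tail (R := R) (H := H) (V := V) k'; omega
  case inr.inl.inl => omega
  case inr.inl.inr.inl =>
    rw [serpentineFst_leg hr hk, serpentineFst_leg hr' hk'] at hfst
    rw [serpentineSnd_leg hr hk, serpentineSnd_leg hr' hk'] at hsnd
    obtain rfl : r = r' := by omega
    obtain rfl : k = k' := by split_ifs at hsnd <;> omega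
    rfl
  case inr.inl.inr.inr =>
    have := one_le_serpentineFst_leg (V := V) hr hk
    have := le_serpentineFst_tail (R := R) (H := H) (V := V) k'
    omega
  case inr.inr.inl => omega
  case inr.inr.inr.inl =>
    have := leg_lt_legs hr' hk'
    omega
  case inr.inr.inr.inr =>
    rw [serpentineFst_tail, serpentineFst_tail] at hfst
    rw [serpentineSnd_tail, serpentineSnd_tail] at hsnd
    split_ifs at hfst hsnd <;> omega

theorem isGenerator_serpentine {D : ℕ} (hR : 0 < R) (hH : 0 < H) (hH2 : Even H) (hV : Even V)
    (hZ : Even Z) (hD : 2 ≤ D) (hHV : H + 1 ≤ V + D) :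
    IsGenerator (1 + H * (2 * R) + V + Z + D) (1 + 4 * R + Z + D) (1 + V + D)
      (serpentineFst R H V) (serpentineSnd R H V Z) := by
  have hstep := serpentine_step hR hH hH2 hV hZ
  have hlast : 1 + H * (2 * R) + V + Z + D = H * (2 * R) + (V + Z + D) + 1 := by ring
  refine ⟨⟨rfl, ?_, fun i hi0 hi => ?_, fun i _ => (hstep i).1⟩,
    ⟨rfl, ?_, fun i hi0 hi => ?_, fun i _ => (hstep i).2⟩,
    fun i _ j _ => serpentine_injective hH⟩
  · rw [hlast, serpentineFst_tail]
    split_ifs <;> omega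
  · rcases zero_or_leg_or_tail R hH i with rfl | ⟨r, k, hr, hk, rfl⟩ | ⟨j, rfl⟩
    · omega
    · rw [serpentineFst_leg hr hk]
      omega
    · rw [serpentineFst_tail]
      split_ifs <;> omega
  · rw [hlast, serpentineSnd_tail]
    split_ifs <;> omega
  · rcases zero_or_leg_or_tail R hH i with rfl | ⟨r, k, hr, hk, rfl⟩ | ⟨j, rfl⟩
    · omega
    · rw [serpentineSnd_leg hr hk]
      split_ifs <;> omega
    · rw [serpentineSnd_tail]
      split_ifs <;> omega

theorem exists_isGenerator {a b m : ℕ} (ha : Odd a) (hb : Odd b) (hm : Odd m) (ha16 : 16 ≤ a)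
    (hab : a ≤ b + 2) (hmul : 16 * m ≤ a * (b - 2)) (hbm : 2 * b ≤ m) :
    ∃ x y, IsGenerator m a b x y := by
  rw [Nat.odd_iff] at ha hb hm
  obtain ⟨R, hR⟩ : ∃ R, R = a / 16 := ⟨_, rfl⟩
  obtain ⟨t, ht⟩ : ∃ t, t = (m - b) / (4 * R) := ⟨_, rfl⟩
  obtain ⟨ρ, hρ⟩ : ∃ ρ, ρ = (m - b) % (4 * R) := ⟨_, rfl⟩
  have hR0 : 0 < R := by omega
  have hdiv : 4 * R * t + ρ = m - b := by rw [ht, hρ]; exact Nat.div_add_mod _ _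
  have hmod : ρ < 4 * R := by rw [hρ]; exact Nat.mod_lt _ (by omega)
  have ht0 : 0 < t := by rw [ht]; exact Nat.div_pos (by omega) (by omega)
  have hlegs : 2 * t * (2 * R) = 4 * R * t := by ring
  have hheight : 2 * t + 2 ≤ b := by
    by_contra! hcon
    have hle : a * (b - 2) ≤ 32 * R * (2 * t - 1) := Nat.mul_le_mul (by omega) (by omega)
    have : 32 * R * (2 * t - 1) ≤ 16 * (4 * R * t) := by
      rw [show 16 * (4 * R * t) = 32 * R * (2 * t) by ring]
      exact Nat.mul_le_mul_left _ (by omega)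
    omega
  have hρ2 : Even ρ := by
    have : (4 * R * t) % 2 = 0 := by rw [mul_assoc]; omega
    rw [Nat.even_iff]
    omega
  obtain ⟨D, hD⟩ : ∃ D, a = 1 + 4 * R + ρ + D := Nat.exists_eq_add_of_le (by omega)
  obtain ⟨V, hV⟩ : ∃ V, b = 1 + V + D := ⟨b - 1 - D, by omega⟩
  have hV2 : Even V := by grind
  have hlen : m = 1 + 2 * t * (2 * R) + V + ρ + D := by omega
  have hgen := isGenerator_serpentine (R := R) (H := 2 * t) hR0 (by omega) (even_two_mul t) hV2
    hρ2 (by omega : 2 ≤ D) (by omega)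
  exact ⟨_, _, by rw [hlen, hD, hV]; exact_mod_cast hgen⟩

end Serpentine

/-- Factors from `{α, β}` whose partial products follow the powers of `w`: the product of depth `n`
is enlarged by `β` as long as it does not exceed `w ^ n`, and by `α` otherwise. -/
noncomputable def greedyProd (w : ℝ) (α β : ℤ) : ℕ → ℤ
  | 0 => 1
  | n + 1 => greedyProd w α β n * if (greedyProd w α β n : ℝ) ≤ w ^ n then β else α

theorem greedyProd_bounds {w : ℝ} {α β : ℤ} (hα : 0 < α) (hαw : α ≤ w) (hwβ : w ≤ β) (n : ℕ) :
    0 < greedyProd w α β n ∧ α * w ^ n ≤ w * greedyProd w α β n ∧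
      w * greedyProd w α β n ≤ β * w ^ n := by
  have hα0 : (0 : ℝ) < α := Int.cast_pos.2 hα
  have hw : 0 < w := hα0.trans_le hαw
  have hβ0 : (0 : ℝ) < β := hw.trans_le hwβ
  induction n with
  | zero => simpa [greedyProd] using ⟨hαw, hwβ⟩
  | succ n ih =>
    obtain ⟨hpos, hlow, hup⟩ := ih
    have : (0 : ℝ) < greedyProd w α β n := Int.cast_pos.2 hpos
    rw [greedyProd]
    split_ifs with hle
    · refine ⟨mul_pos hpos (Int.cast_pos.1 hβ0), ?_, ?_⟩ <;> push_cast
      · calc α * w ^ (n + 1) = w * (α * w ^ n) := by ring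
          _ ≤ β * (w * greedyProd w α β n) := by gcongr
          _ = _ := by ring
      · calc w * (greedyProd w α β n * β) ≤ w * (w ^ n * β) := by gcongr
          _ = _ := by ring
    · refine ⟨mul_pos hpos hα, ?_, ?_⟩ <;> push_cast
      · calc α * w ^ (n + 1) = w * (w ^ n * α) := by ring
          _ ≤ w * (greedyProd w α β n * α) := by gcongr; exact (not_le.1 hle).le
      · calc w * (greedyProd w α β n * α) = α * (w * greedyProd w α β n) := by ring
          _ ≤ w * (β * w ^ n) := by gcongr
          _ = _ := by ring

theorem exists_boxSide_comparable {w : ℝ} {α β : ℤ} (hα : 0 < α) (hαw : α ≤ w) (hwβ : w ≤ β) :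
    ∃ a : ℕ → ℤ, (∀ n, a n = α ∨ a n = β) ∧
      ∃ K, ∀ n, w ^ n ≤ K * boxSide a n ∧ boxSide a n ≤ K * w ^ n := by
  have hα0 : (0 : ℝ) < α := Int.cast_pos.2 hα
  have hw : 0 < w := hα0.trans_le hαw
  let a : ℕ → ℤ := fun n => if (greedyProd w α β n : ℝ) ≤ w ^ n then β else α
  have hside : ∀ n, boxSide a n = greedyProd w α β n := fun n =>
    Finset.prod_range_induction a (greedyProd w α β) rfl n fun _ _ => rfl
  refine ⟨a, fun n => (ite_eq_or_eq _ _ _).symm, max (w / α) (β / w), fun n => ?_⟩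
  obtain ⟨hpos, hlow, hup⟩ := greedyProd_bounds hα hαw hwβ n
  rw [hside]
  have : (0 : ℝ) < greedyProd w α β n := Int.cast_pos.2 hpos
  constructor
  · calc w ^ n ≤ w / α * greedyProd w α β n := by
          rwa [div_mul_eq_mul_div, le_div_iff₀' hα0]
      _ ≤ _ := by gcongr; exact le_max_left _ _
  · calc (greedyProd w α β n : ℝ) ≤ β / w * w ^ n := by
          rwa [div_mul_eq_mul_div, le_div_iff₀' hw]
      _ ≤ _ := by gcongr; exact le_max_right _ _

theorem exists_odd_le_lt_add_two {w : ℝ} (hw : 1 ≤ w) :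
    ∃ a : ℕ, Odd a ∧ a ≤ w ∧ w < a + 2 := by
  have hfloor := Nat.floor_le (show 0 ≤ (w - 1) / 2 by linarith)
  have hlt := Nat.lt_floor_add_one ((w - 1) / 2)
  exact ⟨2 * ⌊(w - 1) / 2⌋₊ + 1, odd_two_mul_add_one _, by push_cast; linarith,
    by push_cast; linarith⟩

theorem exists_isGenerator_of_bracket {M : ℕ} {w z : ℝ} (hM : Odd M) (hw : 18 ≤ w) (hwz : w ≤ z)
    (hmul : 64 * M ≤ w * z) (hzM : 4 * z ≤ M) :
    ∃ a b : ℕ, 0 < a ∧ a ≤ w ∧ w ≤ (a + 2 : ℕ) ∧ 0 < b ∧ b ≤ z ∧ z ≤ (b + 2 : ℕ) ∧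
      ∀ a' b' : ℤ, (a' = a ∨ a' = (a + 2 : ℕ)) → (b' = b ∨ b' = (b + 2 : ℕ)) →
        ∃ x y, IsGenerator M a' b' x y := by
  obtain ⟨a, ha, haw, hwa⟩ := exists_odd_le_lt_add_two (show 1 ≤ w by linarith)
  obtain ⟨b, hb, hbz, hzb⟩ := exists_odd_le_lt_add_two (show 1 ≤ z by linarith)
  have ha16 : 16 ≤ a := by
    exact_mod_cast (by linarith : (16 : ℝ) ≤ a)
  have hab : a ≤ b := by
    have : a < b + 2 := by exact_mod_cast (haw.trans hwz).trans_lt hzb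
    rw [Nat.odd_iff] at ha hb
    omega
  have hmul' : 16 * M ≤ a * (b - 2) := by
    have hb2 : ((b - 2 : ℕ) : ℝ) = b - 2 := by rw [Nat.cast_sub (by omega), Nat.cast_two]
    have : w / 2 * (z / 2) ≤ a * ((b - 2 : ℕ) : ℝ) := by
      rw [hb2]
      exact mul_le_mul (by linarith) (by linarith) (by linarith) a.cast_nonneg
    exact_mod_cast (by linarith : (16 * M : ℝ) ≤ a * ((b - 2 : ℕ) : ℝ))
  have hbM : 2 * (b + 2) ≤ M := by
    exact_mod_cast (by linarith : (2 * (b + 2) : ℝ) ≤ M)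
  refine ⟨a, b, by omega, haw, by exact_mod_cast hwa.le, by omega, hbz, by exact_mod_cast hzb.le,
    ?_⟩
  have hgen : ∀ a' b' : ℕ, Odd a' → Odd b' → a ≤ a' → a' ≤ a + 2 → b ≤ b' → b' ≤ b + 2 →
      ∃ x y, IsGenerator M a' b' x y := fun a' b' ha' hb' haa' haa'' hbb' hbb'' =>
    exists_isGenerator ha' hb' hM (by omega) (by omega)
      (hmul'.trans (Nat.mul_le_mul haa' (by omega))) (by omega)
  rintro _ _ (rfl | rfl) (rfl | rfl) <;>
    exact hgen _ _ (by simp [ha, parity_simps]) (by simp [hb, parity_simps]) (by omega) (by omega)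
      (by omega) (by omega)

theorem exists_odd_scale {p q : ℝ} (hp : 0 < p) (hq : q < 1) (hpq : 1 < p + q) (c : ℝ) :
    ∃ M : ℕ, Odd M ∧ c ≤ (M : ℝ) ^ p ∧ c * M ≤ (M : ℝ) ^ p * (M : ℝ) ^ q ∧
      c * (M : ℝ) ^ q ≤ M := by
  have hodd : Tendsto (fun n : ℕ => ((2 * n + 1 : ℕ) : ℝ)) atTop atTop :=
    tendsto_natCast_atTop_atTop.comp (tendsto_atTop_mono (fun n => by simp; omega) tendsto_id)
  have hlarge : ∀ {r : ℝ}, 0 < r → ∀ᶠ n : ℕ in atTop, c ≤ ((2 * n + 1 : ℕ) : ℝ) ^ r := fun hr =>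
    ((tendsto_rpow_atTop hr).comp hodd).eventually_ge_atTop c
  obtain ⟨n, h₁, h₂, h₃⟩ := ((hlarge hp).and ((hlarge (sub_pos.2 hpq)).and
    (hlarge (sub_pos.2 hq)))).exists
  have hM : (0 : ℝ) < (2 * n + 1 : ℕ) := by positivity
  refine ⟨2 * n + 1, odd_two_mul_add_one n, h₁, ?_, ?_⟩
  · rw [← rpow_add hM, ← sub_add_cancel (p + q) 1, rpow_add_one hM.ne']
    gcongr
  · calc c * ((2 * n + 1 : ℕ) : ℝ) ^ q
        ≤ ((2 * n + 1 : ℕ) : ℝ) ^ (1 - q) * ((2 * n + 1 : ℕ) : ℝ) ^ q := by gcongr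
      _ = _ := by rw [← rpow_add hM, sub_add_cancel, rpow_one]

theorem exists_isSnowflakePair_nat {p q : ℝ} (hp : 0 < p) (hpq : p ≤ q) (hq : q < 1)
    (hadd : 1 < p + q) : ∃ f g : ℕ → ℝ, IsSnowflakePair p q f g := by
  obtain ⟨M, hM, hw, hmul, hzM⟩ := exists_odd_scale hp hq hadd 64
  have hM1 : (1 : ℝ) ≤ M := Nat.one_le_cast.2 hM.pos
  have hMpq : (M : ℝ) ^ p ≤ (M : ℝ) ^ q := rpow_le_rpow_of_exponent_le hM1 hpq
  have hM2 : 2 ≤ M := by exact_mod_cast (by linarith : (2 : ℝ) ≤ M)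
  obtain ⟨a₀, b₀, ha₀, haw, hwa, hb₀, hbz, hzb, hgen⟩ :=
    exists_isGenerator_of_bracket hM (by linarith) hMpq hmul (by linarith)
  obtain ⟨a, ha, K, hK⟩ := exists_boxSide_comparable (Int.natCast_pos.2 ha₀) haw hwa
  obtain ⟨b, hb, L, hL⟩ := exists_boxSide_comparable (Int.natCast_pos.2 hb₀) hbz hzb
  choose x y hxy using fun n => hgen (a n) (b n) (ha n) (hb n)
  simp only [rpow_pow_comm M.cast_nonneg] at hK hL
  exact ⟨_, _, IsGenerator.isSnowflakePair hxy
    ⟨hM2, fun n => (hxy n).fst, fun n => (hK n).1, fun n => (hK n).2⟩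
    ⟨hM2, fun n => (hxy n).snd, fun n => (hL n).1, fun n => (hL n).2⟩ hp (hp.trans_le hpq)⟩

/-! ### Snowflakes of the line in Euclidean spaces -/

theorem exists_isSnowflakePair_real {p q : ℝ} (hp : 0 < p) (hpq : p ≤ q) (hq : q < 1)
    (hadd : 1 < p + q) : ∃ h₁ h₂ : ℝ → ℝ, IsSnowflakePair p q h₁ h₂ := by
  obtain ⟨f, g, hfg⟩ := exists_isSnowflakePair_nat hp hpq hq hadd
  exact isBlowDown_natFloor.exists_isSnowflakePair hp.le (hp.trans_le hpq).le hfg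

theorem IsSnowflakeEmbedding.exists_prod_real {Y : Type*} [PseudoMetricSpace Y] {δ ε : ℝ}
    {g : ℝ → Y} (hg : IsSnowflakeEmbedding δ g) (hε : 0 < ε) (hεδ : ε < δ) (hδ : δ ≤ 1)
    (h : δ * (1 - ε) < ε) : ∃ f : ℝ → ℝ × Y, IsSnowflakeEmbedding ε f := by
  have hδ0 : 0 < δ := hε.trans hεδ
  obtain ⟨h₁, h₂, hpair⟩ := exists_isSnowflakePair_real hε (le_div_self hε.le hδ0 hδ)
    ((div_lt_one hδ0).2 hεδ) (by rw [← sub_lt_iff_lt_add', lt_div_iff₀' hδ0]; exact h)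
  have hmul : ε / δ * δ = ε := div_mul_cancel₀ ε hδ0.ne'
  refine ⟨fun t => (h₁ t, g (h₂ t)), ?_⟩
  rw [← hmul] at hpair ⊢
  rw [mul_div_cancel_right₀ _ hδ0.ne'] at hpair
  exact hpair.isSnowflakeEmbedding_prodMk hg hδ0.le

theorem IsSnowflakeEmbedding.exists_of_finrank_eq {X E F : Type*} [PseudoMetricSpace X]
    [NormedAddCommGroup E] [NormedSpace ℝ E] [FiniteDimensional ℝ E] [NormedAddCommGroup F]
    [NormedSpace ℝ F] [FiniteDimensional ℝ F] {ε : ℝ} {f : X → E} (hf : IsSnowflakeEmbedding ε f)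
    (h : Module.finrank ℝ E = Module.finrank ℝ F) : ∃ g : X → F, IsSnowflakeEmbedding ε g :=
  let e := ContinuousLinearEquiv.ofFinrankEq h
  ⟨e ∘ f, hf.comp_left e.lipschitz e.antilipschitz⟩

theorem exists_isSnowflakeEmbedding_euclideanSpace {n : ℕ} {ε : ℝ} (hn : 2 ≤ n) (hε : ε < 1)
    (hεn : 1 < ε * n) : ∃ f : ℝ → EuclideanSpace ℝ (Fin n), IsSnowflakeEmbedding ε f := by
  induction n, hn using Nat.le_induction generalizing ε with
  | base =>
    push_cast at hεn
    obtain ⟨f, hf⟩ := (isSnowflakeEmbedding_one_id (X := ℝ)).exists_prod_real (ε := ε)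
      (by linarith) hε le_rfl (by linarith)
    exact hf.exists_of_finrank_eq (by simp)
  | succ n hn ih =>
    have hn0 : (0 : ℝ) < n := by positivity
    have hε0 : 0 < ε := pos_of_mul_pos_left (one_pos.trans hεn) (Nat.cast_nonneg _)
    push_cast at hεn
    have hε1 : 0 < 1 - ε := sub_pos.2 hε
    obtain ⟨δ, hlow, hup⟩ : ∃ δ, max ε (1 / n) < δ ∧ δ < min 1 (ε / (1 - ε)) := by
      refine exists_between (max_lt (lt_min hε ?_) (lt_min ?_ ?_))
      · rw [lt_div_iff₀ hε1]
        nlinarith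
      · rw [div_lt_one hn0]
        exact_mod_cast hn
      · rw [div_lt_div_iff₀ hn0 hε1]
        linarith
    rw [max_lt_iff, div_lt_iff₀ hn0] at hlow
    rw [lt_min_iff, lt_div_iff₀ hε1] at hup
    obtain ⟨g, hg⟩ := ih hup.1 hlow.2
    obtain ⟨f, hf⟩ := hg.exists_prod_real hε0 hlow.1 hup.1.le hup.2
    exact hf.exists_of_finrank_eq (by simp [add_comm])

theorem exists_isSnowflakeEmbedding_iff {E : Type*} [NormedAddCommGroup E] [NormedSpace ℝ E]
    [FiniteDimensional ℝ E] {ε : ℝ} (hε : 0 < ε) (hε1 : ε < 1) :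
    (∃ f : ℝ → E, IsSnowflakeEmbedding ε f) ↔ 1 < ε * Module.finrank ℝ E := by
  refine ⟨fun ⟨f, hf⟩ => hf.one_lt_mul_finrank hε hε1, fun h => ?_⟩
  have hdim : (1 : ℝ) < Module.finrank ℝ E := h.trans_le (mul_le_of_le_one_left (by simp) hε1.le)
  obtain ⟨f, hf⟩ := exists_isSnowflakeEmbedding_euclideanSpace (by exact_mod_cast hdim) hε1 h
  exact hf.exists_of_finrank_eq finrank_euclideanSpace_fin

theorem isSnowflakeEmbedding_real_iff {E : Type*} [SeminormedAddCommGroup E] {ε : ℝ} {f : ℝ → E} :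
    IsSnowflakeEmbedding ε f ↔ ∃ L, 1 ≤ L ∧ ∀ s t : ℝ,
      L⁻¹ * |s - t| ^ ε ≤ ‖f s - f t‖ ∧ ‖f s - f t‖ ≤ L * |s - t| ^ ε := by
  simp only [isSnowflakeEmbedding_iff_exists_one_le, dist_eq_norm, norm_eq_abs]

/-- Sharpness of the target dimension: for `α ∈ [N, N+1)` with `α > 0`, the snowflaked
line `(ℝ, |s-t|^{1/(1+α)})` admits no bi-Lipschitz embedding into `ℝ^{N+1}` but does
admit one into `ℝ^{N+2}`; moreover the image of any such embedding into `ℝ^{N+2}` has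
Hausdorff dimension `1 + α`. -/
theorem stmt_18 (N : ℕ) (α : ℝ) (hα : α ∈ Set.Ico (N : ℝ) (N + 1)) (hα0 : 0 < α) :
    (¬ ∃ (f : ℝ → EuclideanSpace ℝ (Fin (N + 1))) (L : ℝ), 1 ≤ L ∧
        ∀ s t : ℝ, L⁻¹ * |s - t| ^ (1 / (1 + α)) ≤ ‖f s - f t‖ ∧
          ‖f s - f t‖ ≤ L * |s - t| ^ (1 / (1 + α))) ∧
    (∃ (f : ℝ → EuclideanSpace ℝ (Fin (N + 2))) (L : ℝ), 1 ≤ L ∧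
        ∀ s t : ℝ, L⁻¹ * |s - t| ^ (1 / (1 + α)) ≤ ‖f s - f t‖ ∧
          ‖f s - f t‖ ≤ L * |s - t| ^ (1 / (1 + α))) ∧
    (∀ (f : ℝ → EuclideanSpace ℝ (Fin (N + 2))) (L : ℝ), 1 ≤ L →
        (∀ s t : ℝ, L⁻¹ * |s - t| ^ (1 / (1 + α)) ≤ ‖f s - f t‖ ∧
          ‖f s - f t‖ ≤ L * |s - t| ^ (1 / (1 + α))) →
        dimH (Set.range f) = ENNReal.ofReal (1 + α)) := by
  have hα1 : 0 < 1 + α := by linarith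
  have hε : 0 < 1 / (1 + α) := one_div_pos.2 hα1
  have hε1 : 1 / (1 + α) < 1 := (div_lt_one hα1).2 (by linarith)
  have hdim : ∀ n : ℕ, (∃ f : ℝ → EuclideanSpace ℝ (Fin n), IsSnowflakeEmbedding (1 / (1 + α)) f) ↔
      1 + α < n := fun n => by
    rw [exists_isSnowflakeEmbedding_iff hε hε1, finrank_euclideanSpace_fin, one_div_mul_eq_div,
      one_lt_div hα1]
  simp only [← isSnowflakeEmbedding_real_iff, hdim]
  refine ⟨?_, ?_, fun f L hL h => ?_⟩
  · push_cast
    linarith [hα.1]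
  · push_cast
    linarith [hα.2]
  · rw [(isSnowflakeEmbedding_real_iff.2 ⟨L, hL, h⟩).dimH_range hε, Real.dimH_univ,
      ← ENNReal.ofReal_one, ← ENNReal.ofReal_div_of_pos hε, one_div_one_div]
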